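/- arXiv:1305.0353 — 2 statements merged into one kernel-verified Lean document; each statement's English description precedes it below -/
import Mathlib

section
/- For the dichotomy algorithm (Di) targeting the i-th non-zero eigenvalue, one has 0 ≤ max{U_ℓ − λ^G_i, λ^G_i − L_ℓ} ≤ (U_0 − L_0) 2^{−ℓ} for all ℓ ≥ 0. -/
open Finset

/-- Dirichlet form on the path with vertices `{1,…,n}`;
`ν i` denotes the weight of edge `{i, i+1}`. -/
noncomputable def EForm (n : ℕ) (ν : ℕ → ℝ) (f g : ℕ → ℝ) : ℝ :=
  ∑ i ∈ Finset.Icc 1 (n - 1), (f i - f (i + 1)) * (g i - g (i + 1)) * ν i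

/-- Mean of `f` with respect to `π` on `{1,…,n}`. -/
noncomputable def piMean (n : ℕ) (π : ℕ → ℝ) (f : ℕ → ℝ) : ℝ :=
  ∑ i ∈ Finset.Icc 1 n, f i * π i

/-- Variance of `f` with respect to `π` on `{1,…,n}`. -/
noncomputable def varPi (n : ℕ) (π : ℕ → ℝ) (f : ℕ → ℝ) : ℝ :=
  piMean n π (fun i => (f i) ^ 2) - (piMean n π f) ^ 2

/-- `f` is non-constant on `{1,…,n}`. -/
def Nonconstant (n : ℕ) (f : ℕ → ℝ) : Prop :=
  ∃ i ∈ Finset.Icc 1 n, ∃ j ∈ Finset.Icc 1 n, f i ≠ f j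

/-- `lam` is the spectral gap: the minimum of the Rayleigh quotients over
non-constant functions. -/
def IsSpectralGap (n : ℕ) (π ν : ℕ → ℝ) (lam : ℝ) : Prop :=
  IsLeast {r : ℝ | ∃ f : ℕ → ℝ, Nonconstant n f ∧ r = EForm n ν f f / varPi n π f} lam

/-- The positive-part recursion with parameter `lam`:
`ψ(i+1) = ψ(i) + max{[ψ(i)−ψ(i−1)]ν(i−1,i) − λ π(i) ψ(i), 0}/ν(i,i+1)` for `1 ≤ i < n`. -/
def PosPartRec (n : ℕ) (π ν : ℕ → ℝ) (lam : ℝ) (ψ : ℕ → ℝ) : Prop :=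
  ∀ i, 1 ≤ i → i < n →
    ψ (i + 1) = ψ i + max ((ψ i - ψ (i - 1)) * ν (i - 1) - lam * (π i * ψ i)) 0 / ν i
/-- `ζ` is an eigenvector of `M^G_{π,ν}` with eigenvalue `lam`, expressed through the
Euler–Lagrange equations (recall the conventions `ν 0 = 0`, `ν n = 0`). -/
def IsEigen (n : ℕ) (π ν : ℕ → ℝ) (lam : ℝ) (ζ : ℕ → ℝ) : Prop :=
  (∃ k ∈ Finset.Icc 1 n, ζ k ≠ 0) ∧
  ∀ k ∈ Finset.Icc 1 n,
    lam * (π k * ζ k) = (ζ k - ζ (k - 1)) * ν (k - 1) + (ζ k - ζ (k + 1)) * ν k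

/-- `ξ` is the function `ξ_λ`: `ξ(1) = −1` and
`ξ(k+1) = ξ(k) + ([ξ(k)−ξ(k−1)] ν(k−1,k) − λ π(k) ξ(k))/ν(k,k+1)` for `1 ≤ k < n`. -/
def XiRec (n : ℕ) (π ν : ℕ → ℝ) (lam : ℝ) (ξ : ℕ → ℝ) : Prop :=
  ξ 1 = -1 ∧ ∀ k, 1 ≤ k → k < n →
    ξ (k + 1) = ξ k + ((ξ k - ξ (k - 1)) * ν (k - 1) - lam * (π k * ξ k)) / ν k

/-- `f` is of type `i` on `{1,…,n}` with peak-valley points `a 1 < b 1 ≤ a 2 < b 2 ≤ ⋯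
≤ a i < b i ≤ n`. -/
def IsTypeWith (n : ℕ) (f : ℕ → ℝ) (i : ℕ) (a b : ℕ → ℕ) : Prop :=
  a 1 = 1 ∧ b i ≤ n ∧
  (∀ j, 1 ≤ j → j ≤ i → a j < b j) ∧
  (∀ j, 1 ≤ j → j < i → b j ≤ a (j + 1) ∧ a (j + 1) ≤ b j + 1) ∧
  (∀ j, 1 ≤ j → j ≤ i →
    StrictMonoOn f (Set.Icc (a j) (b j)) ∨ StrictAntiOn f (Set.Icc (a j) (b j))) ∧
  (∀ j, 1 ≤ j → j < i →
    (f (a j) - f (a j + 1)) * (f (a (j + 1)) - f (a (j + 1) + 1)) < 0) ∧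
  (∀ j, 1 ≤ j → j < i → f (a (j + 1)) = f (b j)) ∧
  (∀ k, b i ≤ k → k ≤ n → f k = f (b i))

/-- `f` is of type `i` on `{1,…,n}`. -/
def IsType (n : ℕ) (f : ℕ → ℝ) (i : ℕ) : Prop :=
  ∃ a b : ℕ → ℕ, IsTypeWith n f i a b

/-!
The increments of `ξ = ξ_λ` are `-λ / ν k` times the partial sums `m k = ∑_{j ≤ k} ξ j π j`, so
the planar vector `(ξ k, m k)` moves along the path by two alternating shears, the first of which
depends monotonically on `λ`. A Sturm comparison shows that the total angle swept by the vector
increases with `λ`. Up to vertex `n` it completes as many half-turns as `m 1, …, m n` has sign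
changes, and `λ > 0` can be an eigenvalue only if `m n = 0`, when a half-turn is just about to be
completed. Hence the numbers of half-turns at the `n - 1` positive eigenvalues strictly increase;
as each is at most `n - 2`, the number for the `i`-th one is exactly `i - 1`, and for general `λ`
it is at most `i - 1` if and only if `λ` does not exceed that eigenvalue.

The type of `ξ` counts the half-turns up to vertex `n - 1`, and the sign of `m n = π(ξ)` tells
whether another one is completed at `n`. So the test made by (Di) decides on which side of the
eigenvalue the midpoint lies.
-/

/-- The number of sign changes along `m 1, …, m k`, zeros being skipped, for a sequence whose
first nonzero term is negative. -/
noncomputable def signChanges (m : ℕ → ℝ) : ℕ → ℕ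
  | 0 => 0
  | k + 1 =>
    if 0 < (-1) ^ signChanges m k * m (k + 1) then signChanges m k + 1 else signChanges m k

theorem signChanges_succ_le {m : ℕ → ℝ} (hm : m 1 < 0) (k : ℕ) : signChanges m (k + 1) ≤ k := by
  induction k with
  | zero => simp [signChanges, hm.le]
  | succ k ih =>
    rw [signChanges]
    split_ifs <;> omega

theorem signChanges_succ_of_eq_zero {m : ℕ → ℝ} {k : ℕ} (hm : m (k + 1) = 0) :
    signChanges m (k + 1) = signChanges m k := by
  simp [signChanges, hm]

/-- A vector `(value, mass)` of the plane together with a number of half-turns: a lift of its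
direction to the universal cover of the circle, ordered by the counterclockwise angle. -/
@[ext]
structure Phase where
  turns : ℕ
  value : ℝ
  mass : ℝ

namespace Phase

variable {A B : Phase} {c d p : ℝ}

/-- The vector is nonzero and lies in the half-plane recorded by `turns`: the lower one,
including the positive half of its boundary, for even `turns`, and the opposite one for odd
`turns`. -/
def InSector (A : Phase) : Prop :=
  (-1) ^ A.turns * A.mass < 0 ∨ A.mass = 0 ∧ 0 < (-1) ^ A.turns * A.value

/-- Comparison of the angles; within one half-plane it is the sign of the determinant. -/
instance : LT Phase where
  lt A B := A.turns < B.turns ∨ A.turns = B.turns ∧ B.value * A.mass < A.value * B.mass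

/-- The shear of the plane that moves the value against the mass. -/
def flowStep (c : ℝ) (A : Phase) : Phase :=
  { A with value := A.value - c * A.mass }

/-- The shear of the plane that adds a multiple of the value to the mass, with the number of
half-turns updated. -/
noncomputable def massStep (p : ℝ) (A : Phase) : Phase where
  turns := if 0 < (-1) ^ A.turns * (A.mass + p * A.value) then A.turns + 1 else A.turns
  value := A.value
  mass := A.mass + p * A.value

theorem turns_le_of_lt (h : A < B) : A.turns ≤ B.turns :=
  h.elim le_of_lt fun h => h.1.le

theorem InSector.sign_mul_mass_nonpos (hA : A.InSector) : (-1) ^ A.turns * A.mass ≤ 0 := by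
  rcases hA with hA | ⟨hA, -⟩
  · exact hA.le
  · simp [hA]

theorem InSector.mass_mul_mass_nonneg (hA : A.InSector) (hB : B.InSector)
    (h : A.turns = B.turns) : 0 ≤ A.mass * B.mass := by
  have hA' := hA.sign_mul_mass_nonpos
  have hB' := hB.sign_mul_mass_nonpos
  rw [← h] at hB'
  rcases neg_one_pow_eq_or ℝ A.turns with he | he <;> rw [he] at hA' hB' <;> nlinarith

theorem turns_lt_of_lt_of_mass_eq_zero (hA : A.InSector) (hB : B.InSector) (h : A < B)
    (hm : A.mass = 0) : A.turns < B.turns := by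
  refine h.resolve_right fun ⟨ht, hdet⟩ => ?_
  have hB' := hB.sign_mul_mass_nonpos
  have hv : 0 < (-1) ^ A.turns * A.value := by simpa [InSector, hm] using hA
  rw [hm, mul_zero] at hdet
  rw [← ht] at hB'
  rcases neg_one_pow_eq_or ℝ A.turns with he | he <;> rw [he] at hv hB' <;> nlinarith

theorem InSector.flowStep (hA : A.InSector) (c : ℝ) : (A.flowStep c).InSector :=
  hA.imp_right fun ⟨hm, hv⟩ => ⟨hm, by simpa [Phase.flowStep, hm] using hv⟩

theorem flowStep_lt_flowStep_self (hm : A.mass ≠ 0) (hcd : c < d) :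
    A.flowStep c < A.flowStep d := by
  refine Or.inr ⟨rfl, ?_⟩
  have : 0 < (d - c) * (A.mass * A.mass) := mul_pos (sub_pos.2 hcd) (mul_self_pos.2 hm)
  simp only [flowStep]
  linarith

theorem flowStep_lt_flowStep (hA : A.InSector) (hB : B.InSector) (h : A < B) (hcd : c ≤ d) :
    A.flowStep c < B.flowStep d := by
  refine h.imp_right fun ⟨ht, hdet⟩ => ⟨ht, ?_⟩
  have : 0 ≤ (d - c) * (A.mass * B.mass) :=
    mul_nonneg (sub_nonneg.2 hcd) (hA.mass_mul_mass_nonneg hB ht)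
  simp only [flowStep]
  linarith only [this, hdet]

theorem InSector.massStep (hA : A.InSector) (hp : 0 < p) : (A.massStep p).InSector := by
  simp only [InSector, Phase.massStep] at hA ⊢
  split_ifs with hcross
  · left
    rw [pow_succ]
    linarith
  · rcases (not_lt.1 hcross).lt_or_eq with hm | hm
    · exact Or.inl hm
    · have hm0 : A.mass + p * A.value = 0 := by simpa using hm
      refine Or.inr ⟨hm0, ?_⟩
      rcases hA with hA | ⟨-, hv⟩
      · rw [mul_add, mul_left_comm] at hm
        exact pos_of_mul_pos_right (by linarith) hp.le
      · exact hv

theorem sign_mul_massStep_mass_pos (hA : A.InSector) (hp : 0 < p) (hm : A.mass = 0) :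
    0 < (-1) ^ A.turns * (A.massStep p).mass := by
  have hv : 0 < (-1) ^ A.turns * A.value := by simpa [InSector, hm] using hA
  have := mul_pos hp hv
  simp only [massStep, hm]
  linarith

/-- Since `p * det(A, B)` is also the determinant of the masses before and after the step, the
vector ahead cannot stay in a half-plane that the vector behind leaves. -/
theorem crosses_of_crosses (hA : A.InSector) (hB : B.InSector) (ht : A.turns = B.turns)
    (hdet : B.value * A.mass < A.value * B.mass) (hp : 0 < p)
    (hcross : 0 < (-1) ^ A.turns * (A.mass + p * A.value)) :
    0 < (-1) ^ B.turns * (B.mass + p * B.value) := by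
  by_contra! hstay
  have hA' := hA.sign_mul_mass_nonpos
  have hB' := hB.sign_mul_mass_nonpos
  rw [← ht] at hstay hB'
  have hdet' : p * (A.value * B.mass) ≤ p * (B.value * A.mass) := by
    rcases neg_one_pow_eq_or ℝ A.turns with he | he <;>
      rw [he] at hcross hstay hA' hB' <;> nlinarith
  exact hdet.not_ge (le_of_mul_le_mul_left hdet' hp)

theorem det_neg_of_crosses (hA : A.InSector) (hB : B.InSector) (ht : A.turns + 1 = B.turns)
    (hp : 0 < p) (hcross : 0 < (-1) ^ A.turns * (A.mass + p * A.value))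
    (hstay : (-1) ^ B.turns * (B.mass + p * B.value) ≤ 0) :
    B.value * A.mass < A.value * B.mass := by
  have hA' := hA.sign_mul_mass_nonpos
  have hmB : (-1) ^ B.turns * B.mass < 0 := by
    refine hB.resolve_right fun ⟨hm, hv⟩ => ?_
    have := mul_pos hp hv
    rw [hm] at hstay
    linarith
  rw [← ht, pow_succ] at hstay hmB
  have hdet : p * (B.value * A.mass) < p * (A.value * B.mass) := by
    rcases neg_one_pow_eq_or ℝ A.turns with he | he <;>
      rw [he] at hcross hstay hA' hmB <;> nlinarith
  exact lt_of_mul_lt_mul_left hdet hp.le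

/-- A shear preserves determinants, so only the half-turns need attention. -/
theorem massStep_lt_massStep (hA : A.InSector) (hB : B.InSector) (h : A < B) (hp : 0 < p) :
    A.massStep p < B.massStep p := by
  have hshear (hdet : B.value * A.mass < A.value * B.mass) :
      B.value * (A.mass + p * A.value) < A.value * (B.mass + p * B.value) := by
    linarith
  change (A.massStep p).turns < (B.massStep p).turns ∨
    (A.massStep p).turns = (B.massStep p).turns ∧ _
  simp only [massStep]
  rcases h with ht | ⟨ht, hdet⟩
  · split_ifs with hcrossA hcrossB hcrossB
    · exact Or.inl (by omega)
    · rcases (Nat.succ_le_of_lt ht).lt_or_eq with hlt | heq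
      · exact Or.inl hlt
      · exact Or.inr
          ⟨heq, hshear (det_neg_of_crosses hA hB heq hp hcrossA (not_lt.1 hcrossB))⟩
    · exact Or.inl (by omega)
    · exact Or.inl ht
  · split_ifs with hcrossA hcrossB hcrossB
    · exact Or.inr ⟨by omega, hshear hdet⟩
    · exact absurd (crosses_of_crosses hA hB ht hdet hp hcrossA) hcrossB
    · exact Or.inl (by omega)
    · exact Or.inr ⟨ht, hshear hdet⟩

end Phase

/-- The conservation law behind the eigenvalue equation: the flow of `f` through the edge
`{k, k+1}` is `lam` times the mass of `f` to the left of that edge. -/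
def FluxEq (n : ℕ) (π ν : ℕ → ℝ) (lam : ℝ) (f : ℕ → ℝ) : Prop :=
  ∀ k < n, (f k - f (k + 1)) * ν k = lam * piMean k π f

theorem piMean_zero (π f : ℕ → ℝ) : piMean 0 π f = 0 := by
  simp [piMean]

theorem piMean_succ (k : ℕ) (π f : ℕ → ℝ) :
    piMean (k + 1) π f = piMean k π f + π (k + 1) * f (k + 1) := by
  rw [piMean, sum_Icc_succ_top (Nat.le_add_left 1 k), ← piMean, mul_comm]

theorem piMean_one (π f : ℕ → ℝ) : piMean 1 π f = π 1 * f 1 := by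
  rw [piMean_succ, piMean_zero, zero_add]

section Flux

variable {n : ℕ} {π ν : ℕ → ℝ} {lam mu : ℝ} {f g : ℕ → ℝ}

theorem XiRec.fluxEq (h : XiRec n π ν lam f) (hν : ∀ k ∈ Icc 1 (n - 1), 0 < ν k)
    (hν0 : ν 0 = 0) : FluxEq n π ν lam f := by
  intro k hk
  induction k with
  | zero => simp [hν0, piMean_zero]
  | succ k ih =>
    have hνk := (hν (k + 1) (mem_Icc.2 ⟨by omega, by omega⟩)).ne'
    rw [h.2 (k + 1) (by omega) hk, piMean_succ, mul_add, ← ih (by omega), Nat.add_sub_cancel]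
    field_simp
    ring

theorem IsEigen.fluxEq (h : IsEigen n π ν lam f) (hν0 : ν 0 = 0) :
    FluxEq (n + 1) π ν lam f := by
  intro k hk
  induction k with
  | zero => simp [hν0, piMean_zero]
  | succ k ih =>
    have heq := h.2 (k + 1) (mem_Icc.2 ⟨by omega, by omega⟩)
    rw [Nat.add_sub_cancel] at heq
    rw [piMean_succ, mul_add, ← ih (by omega), heq]
    ring

theorem FluxEq.mono {m : ℕ} (h : FluxEq n π ν lam f) (hmn : m ≤ n) : FluxEq m π ν lam f :=
  fun k hk => h k (hk.trans_le hmn)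

theorem FluxEq.apply_succ (h : FluxEq n π ν lam f) {k : ℕ} (hk : k < n) (hνk : ν k ≠ 0) :
    f (k + 1) = f k - lam / ν k * piMean k π f := by
  have := h k hk
  field_simp
  linarith

theorem FluxEq.proportional (hf : FluxEq n π ν lam f) (hg : FluxEq n π ν lam g)
    (hν : ∀ k ∈ Icc 1 (n - 1), 0 < ν k) {k : ℕ} (hk : 1 ≤ k) (hkn : k ≤ n) :
    f 1 * g k = g 1 * f k ∧ f 1 * piMean k π g = g 1 * piMean k π f := by
  induction k, hk using Nat.le_induction with
  | base => exact ⟨mul_comm _ _, by rw [piMean_one, piMean_one]; ring⟩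
  | succ k hk ih =>
    obtain ⟨hval, hmean⟩ := ih (by omega)
    have hνk := (hν k (mem_Icc.2 ⟨hk, by omega⟩)).ne'
    have hval' : f 1 * g (k + 1) = g 1 * f (k + 1) := by
      rw [hf.apply_succ hkn hνk, hg.apply_succ hkn hνk]
      linear_combination hval - lam / ν k * hmean
    refine ⟨hval', ?_⟩
    rw [piMean_succ, piMean_succ]
    linear_combination hmean + π (k + 1) * hval'

theorem XiRec.piMean_eq_zero_of_isEigen (hf : XiRec n π ν lam f) (hg : IsEigen n π ν lam g)
    (hν : ∀ k ∈ Icc 1 (n - 1), 0 < ν k) (hν0 : ν 0 = 0) (hνn : ν n = 0) (hlam : lam ≠ 0) :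
    piMean n π f = 0 := by
  obtain ⟨k, hk, hgk⟩ := hg.1
  obtain ⟨hk1, hkn⟩ := mem_Icc.1 hk
  have hflux := hg.fluxEq hν0
  have prop {j : ℕ} (hj : 1 ≤ j) (hjn : j ≤ n) :=
    (hf.fluxEq hν hν0).proportional (hflux.mono n.le_succ) hν hj hjn
  have hg1 : g 1 ≠ 0 := fun h0 => hgk (by simpa [hf.1, h0] using (prop hk1 hkn).1)
  have hgmean : piMean n π g = 0 := by simpa [hνn, hlam] using hflux n n.lt_succ_self
  simpa [hgmean, hg1] using (prop (hk1.trans hkn) le_rfl).2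

/-- The phase of `f` at the vertex `k`: the vector `(f k, ∑_{j ≤ k} f j π j)`, with one half-turn
for each sign change of the partial sums. -/
noncomputable def phase (π f : ℕ → ℝ) (k : ℕ) : Phase where
  turns := signChanges (fun j => piMean j π f) k
  value := f k
  mass := piMean k π f

theorem FluxEq.phase_succ (h : FluxEq n π ν lam f) {k : ℕ} (hk : k < n) (hνk : ν k ≠ 0) :
    phase π f (k + 1) = ((phase π f k).flowStep (lam / ν k)).massStep (π (k + 1)) := by
  simp only [phase, Phase.flowStep, Phase.massStep, signChanges, piMean_succ,
    h.apply_succ hk hνk]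
  rfl

theorem phase_one (hπ1 : 0 < π 1) (hf1 : f 1 < 0) : phase π f 1 = ⟨0, f 1, π 1 * f 1⟩ := by
  have := mul_neg_of_pos_of_neg hπ1 hf1
  ext <;> simp [phase, signChanges, piMean_one, this.le]

theorem phase_turns_lt (hπ1 : 0 < π 1) (hf1 : f 1 < 0) {k : ℕ} (hk : 1 ≤ k) :
    (phase π f k).turns < k := by
  obtain ⟨k, rfl⟩ := Nat.exists_eq_add_of_le' hk
  refine Nat.lt_succ_of_le (signChanges_succ_le ?_ k)
  rw [piMean_one]
  exact mul_neg_of_pos_of_neg hπ1 hf1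

theorem FluxEq.phase_inSector (h : FluxEq n π ν lam f) (hf1 : f 1 < 0)
    (hπ : ∀ k ∈ Icc 1 n, 0 < π k) (hν : ∀ k ∈ Icc 1 (n - 1), 0 < ν k) {k : ℕ} (hk : 1 ≤ k)
    (hkn : k ≤ n) : (phase π f k).InSector := by
  induction k, hk using Nat.le_induction with
  | base =>
    have hπ1 := hπ 1 (mem_Icc.2 ⟨le_rfl, hkn⟩)
    rw [phase_one hπ1 hf1]
    exact Or.inl (by simpa using mul_neg_of_pos_of_neg hπ1 hf1)
  | succ k hk ih =>
    rw [h.phase_succ hkn (hν k (mem_Icc.2 ⟨hk, by omega⟩)).ne']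
    exact ((ih (by omega)).flowStep _).massStep (hπ (k + 1) (mem_Icc.2 ⟨by omega, hkn⟩))

theorem FluxEq.phase_lt_phase (hf : FluxEq n π ν lam f) (hg : FluxEq n π ν mu g)
    (hf1 : f 1 < 0) (hfg : g 1 = f 1) (hlm : lam < mu) (hπ : ∀ k ∈ Icc 1 n, 0 < π k)
    (hν : ∀ k ∈ Icc 1 (n - 1), 0 < ν k) {k : ℕ} (hk : 2 ≤ k) (hkn : k ≤ n) :
    phase π f k < phase π g k := by
  have step {k : ℕ} (hk : 1 ≤ k) (hkn : k < n)
      (hflow : (phase π f k).flowStep (lam / ν k) < (phase π g k).flowStep (mu / ν k)) :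
      phase π f (k + 1) < phase π g (k + 1) := by
    have hνk := (hν k (mem_Icc.2 ⟨hk, by omega⟩)).ne'
    rw [hf.phase_succ hkn hνk, hg.phase_succ hkn hνk]
    exact Phase.massStep_lt_massStep ((hf.phase_inSector hf1 hπ hν hk hkn.le).flowStep _)
      ((hg.phase_inSector (hfg ▸ hf1) hπ hν hk hkn.le).flowStep _) hflow
      (hπ (k + 1) (mem_Icc.2 ⟨by omega, hkn⟩))
  induction k, hk using Nat.le_induction with
  | base =>
    have hπ1 := hπ 1 (mem_Icc.2 ⟨le_rfl, by omega⟩)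
    have hν1 := hν 1 (mem_Icc.2 ⟨le_rfl, by omega⟩)
    refine step le_rfl hkn ?_
    rw [phase_one hπ1 hf1, phase_one hπ1 (hfg ▸ hf1), hfg]
    exact Phase.flowStep_lt_flowStep_self (mul_neg_of_pos_of_neg hπ1 hf1).ne (by gcongr)
  | succ k hk ih =>
    have hνk := hν k (mem_Icc.2 ⟨by omega, by omega⟩)
    exact step (by omega) hkn (Phase.flowStep_lt_flowStep
      (hf.phase_inSector hf1 hπ hν (by omega) (by omega))
      (hg.phase_inSector (hfg ▸ hf1) hπ hν (by omega) (by omega)) (ih (by omega)) (by gcongr))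

end Flux

/-- A witness `a`, `b` that `f` is of type `i`, with the monotonicity expressed by single steps:
the first piece is increasing, the directions alternate, and `f` is constant after the last
piece, which ends at `n` or `n - 1`. -/
structure IsZigzag (n : ℕ) (f : ℕ → ℝ) (i : ℕ) (a b : ℕ → ℕ) : Prop where
  first : a 1 = 1
  last_le : b i ≤ n
  le_last_succ : n ≤ b i + 1
  lt : ∀ j, 1 ≤ j → j ≤ i → a j < b j
  adjacent : ∀ j, 1 ≤ j → j < i → b j ≤ a (j + 1) ∧ a (j + 1) ≤ b j + 1
  alternates : ∀ j, 1 ≤ j → j ≤ i → ∀ k, a j ≤ k → k < b j →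
    0 < (-1) ^ (j - 1) * (f (k + 1) - f k)
  plateau : ∀ j, 1 ≤ j → j < i → f (a (j + 1)) = f (b j)
  tail : f n = f (b i)

namespace IsZigzag

variable {n : ℕ} {f : ℕ → ℝ} {i : ℕ} {a b : ℕ → ℕ}

theorem strictMonoOn_or_strictAntiOn (h : IsZigzag n f i a b) {j : ℕ} (hj : 1 ≤ j)
    (hji : j ≤ i) :
    StrictMonoOn f (Set.Icc (a j) (b j)) ∨ StrictAntiOn f (Set.Icc (a j) (b j)) := by
  rcases neg_one_pow_eq_or ℝ (j - 1) with he | he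
  · refine Or.inl (strictMonoOn_of_lt_add_one Set.ordConnected_Icc fun k _ hk hk' => ?_)
    have := h.alternates j hj hji k hk.1 hk'.2
    rw [he] at this
    linarith
  · refine Or.inr (strictAntiOn_of_add_one_lt Set.ordConnected_Icc fun k _ hk hk' => ?_)
    have := h.alternates j hj hji k hk.1 hk'.2
    rw [he] at this
    linarith

theorem slope_mul_slope_neg (h : IsZigzag n f i a b) {j : ℕ} (hj : 1 ≤ j) (hji : j < i) :
    (f (a j) - f (a j + 1)) * (f (a (j + 1)) - f (a (j + 1) + 1)) < 0 := by
  obtain ⟨p, rfl⟩ := Nat.exists_eq_add_of_le' hj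
  have hfst := h.alternates (p + 1) hj hji.le _ le_rfl (h.lt _ hj hji.le)
  have hsnd := h.alternates (p + 2) (by omega) hji _ le_rfl (h.lt _ (by omega) hji)
  rw [Nat.add_sub_cancel] at hfst
  rw [show p + 2 - 1 = p + 1 from rfl, pow_succ] at hsnd
  rcases neg_one_pow_eq_or ℝ p with he | he <;> rw [he] at hfst hsnd <;> nlinarith

theorem isTypeWith (h : IsZigzag n f i a b) : IsTypeWith n f i a b := by
  refine ⟨h.first, h.last_le, h.lt, h.adjacent, fun j => h.strictMonoOn_or_strictAntiOn,
    fun j => h.slope_mul_slope_neg, h.plateau, fun k hk hkn => ?_⟩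
  have hn := h.le_last_succ
  obtain rfl | rfl : k = b i ∨ k = n := by omega
  · rfl
  · exact h.tail

theorem two (hf : f 1 < f 2) : IsZigzag 2 f 1 (fun _ => 1) (fun _ => 2) where
  first := rfl
  last_le := le_rfl
  le_last_succ := by omega
  lt := by simp
  adjacent := by omega
  alternates j hj hj1 k hk hk2 := by
    obtain rfl : j = 1 := by omega
    obtain rfl : k = 1 := by omega
    simpa using hf
  plateau := by omega
  tail := rfl

theorem succ_of_eq (h : IsZigzag n f i a b) (hb : b i = n) (hf : f (n + 1) = f n) :
    IsZigzag (n + 1) f i a b :=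
  { h with
    last_le := by omega
    le_last_succ := by omega
    tail := by rw [hf, h.tail] }

theorem extend (h : IsZigzag n f i a b) (hb : b i = n)
    (hf : 0 < (-1) ^ (i - 1) * (f (n + 1) - f n)) :
    IsZigzag (n + 1) f i a (Function.update b i (n + 1)) where
  first := h.first
  last_le := by simp
  le_last_succ := by simp
  lt j hj hji := by
    have := h.lt j hj hji
    rcases eq_or_ne j i with rfl | hne
    · rw [Function.update_self]
      omega
    · rwa [Function.update_of_ne hne]
  adjacent j hj hji := by
    rw [Function.update_of_ne hji.ne]
    exact h.adjacent j hj hji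
  alternates j hj hji k hk hkb := by
    rcases eq_or_ne j i with rfl | hne
    · rw [Function.update_self] at hkb
      rcases eq_or_ne k n with rfl | hkn
      · exact hf
      · exact h.alternates j hj hji k hk (by omega)
    · rw [Function.update_of_ne hne] at hkb
      exact h.alternates j hj hji k hk hkb
  plateau j hj hji := by
    rw [Function.update_of_ne hji.ne]
    exact h.plateau j hj hji
  tail := by simp

theorem append (h : IsZigzag n f i a b) (hi : 1 ≤ i) (hf : 0 < (-1) ^ i * (f (n + 1) - f n)) :
    IsZigzag (n + 1) f (i + 1) (Function.update a (i + 1) n)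
      (Function.update b (i + 1) (n + 1)) where
  first := by
    rw [Function.update_of_ne (by omega)]
    exact h.first
  last_le := by simp
  le_last_succ := by simp
  lt j hj hji := by
    rcases eq_or_ne j (i + 1) with rfl | hne
    · simp
    · rw [Function.update_of_ne hne, Function.update_of_ne hne]
      exact h.lt j hj (by omega)
  adjacent j hj hji := by
    rw [Function.update_of_ne hji.ne]
    rcases eq_or_ne j i with rfl | hne
    · rw [Function.update_self]
      exact ⟨h.last_le, h.le_last_succ⟩
    · rw [Function.update_of_ne (by omega)]
      exact h.adjacent j hj (by omega)
  alternates j hj hji k hk hkb := by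
    rcases eq_or_ne j (i + 1) with rfl | hne
    · rw [Function.update_self] at hk hkb
      obtain rfl : k = n := by omega
      exact hf
    · rw [Function.update_of_ne hne] at hk hkb
      exact h.alternates j hj (by omega) k hk hkb
  plateau j hj hji := by
    rw [Function.update_of_ne hji.ne]
    rcases eq_or_ne j i with rfl | hne
    · rw [Function.update_self]
      exact h.tail
    · rw [Function.update_of_ne (by omega)]
      exact h.plateau j hj (by omega)
  tail := by simp

end IsZigzag

theorem exists_isZigzag_signChanges {n : ℕ} {f m c : ℕ → ℝ} (hm1 : m 1 < 0)
    (hm : ∀ k, 1 ≤ k → k + 1 < n → m k = 0 → 0 < (-1) ^ signChanges m k * m (k + 1))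
    (hc : ∀ k, 1 ≤ k → k < n → 0 < c k)
    (hf : ∀ k, 1 ≤ k → k < n → f (k + 1) = f k - c k * m k) {k : ℕ} (hk : 1 ≤ k)
    (hkn : k < n) :
    ∃ a b, IsZigzag (k + 1) f (signChanges m k + 1) a b ∧
      (m k ≠ 0 → b (signChanges m k + 1) = k + 1) := by
  have hsign {k : ℕ} (hk : 1 ≤ k) (hkn : k < n) (v : ℕ) (hv : (-1) ^ v * m k < 0) :
      0 < (-1) ^ v * (f (k + 1) - f k) := by
    have := mul_neg_of_pos_of_neg (hc k hk hkn) hv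
    rw [hf k hk hkn]
    linarith
  induction k, hk using Nat.le_induction with
  | base =>
    have hv : signChanges m 1 = 0 := Nat.le_zero.1 (signChanges_succ_le hm1 0)
    have := hsign le_rfl hkn 0 (by simpa using hm1)
    rw [hv]
    exact ⟨_, _, IsZigzag.two (by simpa using this), fun _ => rfl⟩
  | succ k hk ih =>
    obtain ⟨a, b, hzig, hb⟩ := ih (by omega)
    rw [signChanges]
    split_ifs with hcross
    · refine ⟨_, _, hzig.append (by omega) (hsign (by omega) hkn _ ?_), fun _ => by simp⟩
      rw [pow_succ]
      linarith
    · replace hb := hb fun h0 => hcross (hm k hk hkn h0)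
      rcases (not_lt.1 hcross).lt_or_eq with hneg | hzero
      · exact ⟨_, _, hzig.extend hb (hsign (by omega) hkn _ hneg), fun _ => by simp⟩
      · have hm0 : m (k + 1) = 0 := by simpa using hzero
        exact ⟨a, b, hzig.succ_of_eq hb (by rw [hf _ (by omega) hkn, hm0]; ring),
          fun h => absurd hm0 h⟩

section Bisection

variable {n : ℕ} {π ν : ℕ → ℝ}

theorem FluxEq.isType {lam : ℝ} {f : ℕ → ℝ} (h : FluxEq n π ν lam f) (hn : 2 ≤ n)
    (hlam : 0 < lam) (hf1 : f 1 < 0) (hπ : ∀ k ∈ Icc 1 n, 0 < π k)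
    (hν : ∀ k ∈ Icc 1 (n - 1), 0 < ν k) : IsType n f ((phase π f (n - 1)).turns + 1) := by
  have hν' (k : ℕ) (hk : 1 ≤ k) (hkn : k < n) : 0 < ν k := hν k (mem_Icc.2 ⟨hk, by omega⟩)
  obtain ⟨a, b, hzig, -⟩ := exists_isZigzag_signChanges (m := fun j => piMean j π f)
    (by simpa [piMean_one] using
      mul_neg_of_pos_of_neg (hπ 1 (mem_Icc.2 ⟨le_rfl, by omega⟩)) hf1)
    (fun k hk hkn h0 => by
      have hsec := h.phase_inSector hf1 hπ hν hk (by omega)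
      have := Phase.sign_mul_massStep_mass_pos (hsec.flowStep (lam / ν k))
        (hπ (k + 1) (mem_Icc.2 ⟨by omega, by omega⟩)) h0
      rwa [← h.phase_succ (by omega) (hν' k hk (by omega)).ne'] at this)
    (fun k hk hkn => div_pos hlam (hν' k hk hkn))
    (fun k hk hkn => h.apply_succ hkn (hν' k hk hkn).ne')
    (show 1 ≤ n - 1 by omega) (by omega)
  rw [Nat.sub_add_cancel (by omega)] at hzig
  exact ⟨a, b, hzig.isTypeWith⟩

theorem FluxEq.turns_lt_turns {lam mu : ℝ} {f g : ℕ → ℝ} (hf : FluxEq n π ν lam f)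
    (hg : FluxEq n π ν mu g) (hn : 2 ≤ n) (hf1 : f 1 < 0) (hfg : g 1 = f 1) (hlm : lam < mu)
    (hπ : ∀ k ∈ Icc 1 n, 0 < π k) (hν : ∀ k ∈ Icc 1 (n - 1), 0 < ν k)
    (hmean : piMean n π f = 0) : (phase π f n).turns < (phase π g n).turns :=
  Phase.turns_lt_of_lt_of_mass_eq_zero (hf.phase_inSector hf1 hπ hν (by omega) le_rfl)
    (hg.phase_inSector (hfg ▸ hf1) hπ hν (by omega) le_rfl)
    (hf.phase_lt_phase hg hf1 hfg hlm hπ hν hn le_rfl) hmean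

theorem eq_self_of_strictMonoOn_Iic {φ : ℕ → ℕ} {N : ℕ} (hφ : StrictMonoOn φ (Set.Iic N))
    (hN : φ N ≤ N) {j : ℕ} (hj : j ≤ N) : φ j = j := by
  refine le_antisymm ?_ (hφ.Iic_id_le j hj)
  induction hj using Nat.decreasingInduction with
  | self => exact hN
  | of_succ k hk ih => exact Nat.le_of_lt_succ ((hφ hk.le hk k.lt_succ_self).trans_le ih)

theorem phase_turns_eigenvalue {lamG : ℕ → ℝ} {ξ : ℝ → ℕ → ℝ}
    (hmono : StrictMonoOn lamG (Set.Iic (n - 1))) (hξ : ∀ lam, XiRec n π ν lam (ξ lam))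
    (hmean : ∀ j, 1 ≤ j → j ≤ n - 1 → piMean n π (ξ (lamG j)) = 0)
    (hπ : ∀ k ∈ Icc 1 n, 0 < π k) (hν : ∀ k ∈ Icc 1 (n - 1), 0 < ν k) (hν0 : ν 0 = 0)
    {i : ℕ} (hi1 : 1 ≤ i) (hi2 : i ≤ n - 1) : (phase π (ξ (lamG i)) n).turns = i - 1 := by
  have hflux (lam : ℝ) := (hξ lam).fluxEq hν hν0
  have hneg (lam : ℝ) : ξ lam 1 < 0 := by simp [(hξ lam).1]
  have hstrict : StrictMonoOn (fun j => (phase π (ξ (lamG (j + 1))) n).turns)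
      (Set.Iic (n - 2)) := by
    intro j hj k hk hjk
    simp only [Set.mem_Iic] at hj hk
    exact (hflux _).turns_lt_turns (hflux _) (by omega) (hneg _) (by simp [(hξ _).1])
      (hmono (show j + 1 ≤ n - 1 by omega) (show k + 1 ≤ n - 1 by omega) (by omega)) hπ hν
      (hmean _ (by omega) (by omega))
  have hlast : (phase π (ξ (lamG (n - 2 + 1))) n).turns ≤ n - 2 := by
    obtain ⟨k, rfl⟩ : ∃ k, n = k + 2 := ⟨n - 2, by omega⟩
    have hlt : (phase π (ξ (lamG (k + 1))) (k + 1)).turns < k + 1 :=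
      phase_turns_lt (hπ 1 (mem_Icc.2 ⟨le_rfl, by omega⟩)) (hneg _) (by omega)
    exact (signChanges_succ_of_eq_zero (hmean _ (by omega) le_rfl)).trans_le
      (Nat.le_of_lt_succ hlt)
  simpa [Nat.sub_add_cancel hi1] using
    eq_self_of_strictMonoOn_Iic hstrict hlast (show i - 1 ≤ n - 2 by omega)

theorem phase_turns_le_iff {ξ : ℝ → ℕ → ℝ} {lam z : ℝ} (hn : 2 ≤ n)
    (hξ : ∀ lam, XiRec n π ν lam (ξ lam)) (hz : piMean n π (ξ z) = 0)
    (hπ : ∀ k ∈ Icc 1 n, 0 < π k) (hν : ∀ k ∈ Icc 1 (n - 1), 0 < ν k) (hν0 : ν 0 = 0) :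
    (phase π (ξ lam) n).turns ≤ (phase π (ξ z) n).turns ↔ lam ≤ z := by
  have hflux (lam : ℝ) := (hξ lam).fluxEq hν hν0
  have hneg (lam : ℝ) : ξ lam 1 < 0 := by simp [(hξ lam).1]
  have hsame (lam mu : ℝ) : ξ mu 1 = ξ lam 1 := by simp [(hξ _).1]
  refine ⟨fun hle => ?_, fun hle => ?_⟩
  · by_contra! hlt
    exact hle.not_gt ((hflux z).turns_lt_turns (hflux lam) hn (hneg z) (hsame _ _) hlt hπ hν hz)
  · rcases hle.eq_or_lt with rfl | hlt
    · exact le_rfl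
    · exact Phase.turns_le_of_lt ((hflux lam).phase_lt_phase (hflux z) (hneg lam) (hsame _ _) hlt
        hπ hν hn le_rfl)

/-- One update `(L, U) ↦ (L', U')` of the algorithm (Di) for the `i`-th eigenvalue, where `f` is
the function `ξ` at the midpoint of `L` and `U`. -/
def DiStep (n : ℕ) (π f : ℕ → ℝ) (i : ℕ) (L U L' U' : ℝ) : Prop :=
  ((∃ j, i < j ∧ j ≤ n - 1 ∧ IsType n f j) ∨
      (IsType n f i ∧ 0 < (-1 : ℝ) ^ (i - 1) * piMean n π f) →
    L' = L ∧ U' = (L + U) / 2) ∧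
  ((∃ j, 1 ≤ j ∧ j < i ∧ IsType n f j) ∨
      (IsType n f i ∧ (-1 : ℝ) ^ (i - 1) * piMean n π f < 0) →
    L' = (L + U) / 2 ∧ U' = U) ∧
  (IsType n f i ∧ piMean n π f = 0 →
    L' = (L + U) / 2 ∧ U' = (L + U) / 2)

namespace DiStep

variable {f : ℕ → ℝ} {i : ℕ} {L U L' U' : ℝ}

theorem eq_of_le_turns (h : DiStep (n + 1) π f i L U L' U')
    (hf : IsType (n + 1) f ((phase π f n).turns + 1)) (hn : (phase π f n).turns + 1 ≤ n)
    (hi : i ≤ (phase π f (n + 1)).turns) : L' = L ∧ U' = (L + U) / 2 := by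
  refine h.1 ?_
  rcases le_or_gt i (phase π f n).turns with hlt | hge
  · exact Or.inl ⟨_, by omega, hn, hf⟩
  · simp only [phase, signChanges] at hi hge hf
    split_ifs at hi with hcross
    · obtain rfl : i = signChanges (fun j => piMean j π f) n + 1 := by omega
      exact Or.inr ⟨hf, hcross⟩
    · omega

theorem eq_of_turns_lt (h : DiStep (n + 1) π f i L U L' U')
    (hf : IsType (n + 1) f ((phase π f n).turns + 1)) (hi : (phase π f (n + 1)).turns < i) :
    L' = (L + U) / 2 ∧ U' = U ∨
      L' = (L + U) / 2 ∧ U' = (L + U) / 2 ∧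
        piMean (n + 1) π f = 0 ∧ i = (phase π f (n + 1)).turns + 1 := by
  rcases lt_or_ge ((phase π f n).turns + 1) i with hlt | hge
  · exact Or.inl (h.2.1 (Or.inl ⟨_, by omega, hlt, hf⟩))
  · simp only [phase, signChanges] at hi hge hf ⊢
    split_ifs at hi ⊢ with hcross
    · omega
    · obtain rfl : i = signChanges (fun j => piMean j π f) n + 1 := by omega
      rcases (not_lt.1 hcross).lt_or_eq with hneg | hzero
      · exact Or.inl (h.2.1 (Or.inr ⟨hf, hneg⟩))
      · have hmean : piMean (n + 1) π f = 0 := by simpa using hzero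
        obtain ⟨hL, hU⟩ := h.2.2 ⟨hf, hmean⟩
        exact Or.inr ⟨hL, hU, hmean, rfl⟩

theorem halves {ξ : ℝ → ℕ → ℝ} {z : ℝ} (h : DiStep n π (ξ ((L + U) / 2)) i L U L' U')
    (hn : 2 ≤ n) (hξ : ∀ lam, XiRec n π ν lam (ξ lam)) (hz : piMean n π (ξ z) = 0)
    (hi : i = (phase π (ξ z) n).turns + 1) (hπ : ∀ k ∈ Icc 1 n, 0 < π k)
    (hν : ∀ k ∈ Icc 1 (n - 1), 0 < ν k) (hν0 : ν 0 = 0) (hL : 0 < L)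
    (hmem : z ∈ Set.Icc L U) : 0 < L' ∧ z ∈ Set.Icc L' U' ∧ U' - L' ≤ (U - L) / 2 := by
  obtain ⟨hLz, hzU⟩ := hmem
  obtain ⟨k, rfl⟩ : ∃ k, n = k + 1 := ⟨n - 1, by omega⟩
  have hmid : 0 < (L + U) / 2 := by linarith
  have hneg : ξ ((L + U) / 2) 1 < 0 := by simp [(hξ _).1]
  have htype := ((hξ ((L + U) / 2)).fluxEq hν hν0).isType hn hmid hneg hπ hν
  have hcompare := phase_turns_le_iff (lam := (L + U) / 2) hn hξ hz hπ hν hν0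
  rcases lt_or_ge (phase π (ξ ((L + U) / 2)) (k + 1)).turns i with hlt | hge
  · have hmidz := hcompare.1 (Nat.le_of_lt_succ (hlt.trans_eq hi))
    rcases h.eq_of_turns_lt htype hlt with ⟨rfl, rfl⟩ | ⟨rfl, rfl, hmean, hi'⟩
    · exact ⟨hmid, ⟨hmidz, hzU⟩, by linarith⟩
    · have hzmid := (phase_turns_le_iff hn hξ hmean hπ hν hν0).1
        (Nat.le_of_succ_le_succ (hi.symm.trans hi').le)
      exact ⟨hmid, ⟨hmidz, hzmid⟩, by linarith⟩
  · have hturns := phase_turns_lt (hπ 1 (mem_Icc.2 ⟨le_rfl, by omega⟩)) hneg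
      (show 1 ≤ k by omega)
    obtain ⟨rfl, rfl⟩ := h.eq_of_le_turns htype hturns hge
    have hzmid := not_le.1 fun hle => (hcompare.2 hle).not_gt (by omega)
    exact ⟨hL, ⟨hLz, hzmid.le⟩, by linarith⟩

end DiStep

end Bisection

theorem stmt9_general {n i : ℕ} (hi1 : 1 ≤ i) (hi2 : i ≤ n - 1) {π ν : ℕ → ℝ}
    (hπ : ∀ k ∈ Icc 1 n, 0 < π k) (hν : ∀ k ∈ Icc 1 (n - 1), 0 < ν k)
    (hν0 : ν 0 = 0) (hνn : ν n = 0) {lamG : ℕ → ℝ} (hlamG0 : lamG 0 = 0)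
    (hlamGmono : StrictMonoOn lamG (Set.Iic (n - 1)))
    (hlamGeig : ∀ j, 1 ≤ j → j ≤ n - 1 → ∃ ζ, IsEigen n π ν (lamG j) ζ)
    {ξ : ℝ → ℕ → ℝ} (hξ : ∀ lam, XiRec n π ν lam (ξ lam)) {L U : ℕ → ℝ} (hL0 : 0 < L 0)
    (hmem : lamG i ∈ Set.Icc (L 0) (U 0))
    (hupd : ∀ ℓ, DiStep n π (ξ ((L ℓ + U ℓ) / 2)) i (L ℓ) (U ℓ) (L (ℓ + 1)) (U (ℓ + 1)))
    (ℓ : ℕ) :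
    0 ≤ max (U ℓ - lamG i) (lamG i - L ℓ) ∧
      max (U ℓ - lamG i) (lamG i - L ℓ) ≤ (U 0 - L 0) / 2 ^ ℓ := by
  have hmean (j : ℕ) (hj : 1 ≤ j) (hjn : j ≤ n - 1) : piMean n π (ξ (lamG j)) = 0 := by
    obtain ⟨ζ, hζ⟩ := hlamGeig j hj hjn
    have hpos : lamG 0 < lamG j := hlamGmono (Nat.zero_le _) hjn hj
    exact (hξ _).piMean_eq_zero_of_isEigen hζ hν hν0 hνn (hlamG0 ▸ hpos).ne'
  have hturns := phase_turns_eigenvalue hlamGmono hξ hmean hπ hν hν0 hi1 hi2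
  have hbracket : 0 < L ℓ ∧ lamG i ∈ Set.Icc (L ℓ) (U ℓ) ∧ U ℓ - L ℓ ≤ (U 0 - L 0) / 2 ^ ℓ := by
    induction ℓ with
    | zero => exact ⟨hL0, hmem, by simp⟩
    | succ ℓ ih =>
      obtain ⟨hL, hmem, hlen⟩ := ih
      obtain ⟨hL', hmem', hlen'⟩ := (hupd ℓ).halves (by omega) hξ (hmean i hi1 hi2) (by omega)
        hπ hν hν0 hL hmem
      refine ⟨hL', hmem', hlen'.trans ?_⟩
      rw [pow_succ, ← div_div]
      gcongr
  obtain ⟨-, ⟨hLz, hzU⟩, hlen⟩ := hbracket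
  exact ⟨le_max_of_le_left (by linarith), max_le (by linarith) (by linarith)⟩

theorem stmt9 (n : ℕ) (hn : 3 ≤ n) (i : ℕ) (hi1 : 1 ≤ i) (hi2 : i ≤ n - 1)
    (π ν : ℕ → ℝ)
    (hπ : ∀ k ∈ Finset.Icc 1 n, 0 < π k)
    (hπ1 : ∑ k ∈ Finset.Icc 1 n, π k = 1)
    (hν : ∀ k ∈ Finset.Icc 1 (n - 1), 0 < ν k)
    (hν0 : ν 0 = 0) (hνn : ν n = 0)
    -- the (simple) eigenvalues `0 = λ^G_0 < λ^G_1 < ⋯ < λ^G_{n−1}` of `M^G_{π,ν}`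
    (lamG : ℕ → ℝ) (hlamG0 : lamG 0 = 0)
    (hlamGmono : ∀ j, j + 1 ≤ n - 1 → lamG j < lamG (j + 1))
    (hlamGeig : ∀ j, j ≤ n - 1 → ∃ ζ : ℕ → ℝ, IsEigen n π ν (lamG j) ζ)
    (hlamGall : ∀ (μ : ℝ) (ζ : ℕ → ℝ), IsEigen n π ν μ ζ → ∃ j ≤ n - 1, μ = lamG j)
    -- the family `λ ↦ ξ_λ`
    (ξ : ℝ → ℕ → ℝ) (hξ : ∀ lam : ℝ, XiRec n π ν lam (ξ lam))
    -- the dichotomy algorithm (Di)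
    (L U : ℕ → ℝ) (hL0 : 0 < L 0) (hLi : L 0 < lamG i) (hUi : lamG i < U 0)
    (hupd : ∀ ℓ,
      ((∃ j, i < j ∧ j ≤ n - 1 ∧ IsType n (ξ ((L ℓ + U ℓ) / 2)) j) ∨
        (IsType n (ξ ((L ℓ + U ℓ) / 2)) i ∧
          0 < (-1 : ℝ) ^ (i - 1) * piMean n π (ξ ((L ℓ + U ℓ) / 2))) →
        L (ℓ + 1) = L ℓ ∧ U (ℓ + 1) = (L ℓ + U ℓ) / 2) ∧
      ((∃ j, 1 ≤ j ∧ j < i ∧ IsType n (ξ ((L ℓ + U ℓ) / 2)) j) ∨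
        (IsType n (ξ ((L ℓ + U ℓ) / 2)) i ∧
          (-1 : ℝ) ^ (i - 1) * piMean n π (ξ ((L ℓ + U ℓ) / 2)) < 0) →
        L (ℓ + 1) = (L ℓ + U ℓ) / 2 ∧ U (ℓ + 1) = U ℓ) ∧
      (IsType n (ξ ((L ℓ + U ℓ) / 2)) i ∧ piMean n π (ξ ((L ℓ + U ℓ) / 2)) = 0 →
        L (ℓ + 1) = (L ℓ + U ℓ) / 2 ∧ U (ℓ + 1) = (L ℓ + U ℓ) / 2)) :
    ∀ ℓ, 0 ≤ max (U ℓ - lamG i) (lamG i - L ℓ) ∧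
      max (U ℓ - lamG i) (lamG i - L ℓ) ≤ (U 0 - L 0) / 2 ^ ℓ := by
  have hmono : StrictMonoOn lamG (Set.Iic (n - 1)) :=
    strictMonoOn_of_lt_add_one Set.ordConnected_Iic fun j _ _ hj => hlamGmono j hj
  exact stmt9_general hi1 hi2 hπ hν hν0 hνn hlamG0 hmono (fun j _ => hlamGeig j) hξ hL0
    ⟨hLi.le, hUi.le⟩ hupd
end

section
/- For each 1 ≤ i ≤ n−1 there exists ε > 0 such that for every λ_0 ∈ (λ^G_i − ε, λ^G_i + ε) with λ_0 > 0, the sequence defined by λ_{ℓ+1} = L(λ_ℓ) for ℓ ≥ 0 is monotonic from index 1 onward and converges to λ^G_i. -/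
open Finset

/-!
Let `ζ_j` be the eigenvectors of `M^G_{π,ν}`, orthogonal in `L²(π)`. The recursion for `ξ_λ` says
that `ξ_λ` satisfies the eigenvalue equation for `λ` at every vertex but the last one, so pairing
it with `ζ_j` gives `(λ - λ_j) π(ξ_λ ζ_j) = P ζ_j(n)` with a factor `P` that does not depend on `j`.
By Parseval, `L(λ)` is then the mean of `λ_1, …, λ_{n-1}` with weights proportional to
`w_j / (λ - λ_j)²`, where `w_j = ζ_j(n)² / π(ζ_j²)` is positive. Close to `λ_i` this reads
`L(λ) - λ_i = (λ - λ_i)² R(λ)` with `R` continuous, so `λ_i` attracts. If `R(λ_i) ≠ 0` then `L`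
takes values on one side of `λ_i` only; if `R(λ_i) = 0` then `L` preserves both sides, because the
numerator of `R` is nondecreasing near `λ_i`.
-/

open Filter Topology Metric

/-! ### Iteration near a superattracting fixed point -/

section Iteration

theorem antitone_iterate_of_mapsTo {α : Type*} [Preorder α] {f : α → α} {s : Set α} {y : α}
    (hs : Set.MapsTo f s s) (hf : ∀ z ∈ s, f z ≤ z) (hy : y ∈ s) :
    Antitone fun l => f^[l] y :=
  antitone_nat_of_succ_le fun l => by
    rw [Function.iterate_succ_apply']
    exact hf _ (hs.iterate l hy)

theorem monotone_iterate_of_mapsTo {α : Type*} [Preorder α] {f : α → α} {s : Set α} {y : α}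
    (hs : Set.MapsTo f s s) (hf : ∀ z ∈ s, z ≤ f z) (hy : y ∈ s) :
    Monotone fun l => f^[l] y :=
  antitone_iterate_of_mapsTo (α := αᵒᵈ) hs hf hy

theorem mapsTo_ball_of_dist_le {α : Type*} [PseudoMetricSpace α] {f : α → α} {x : α} {ε : ℝ}
    (hf : ∀ y ∈ ball x ε, dist (f y) x ≤ dist y x) : Set.MapsTo f (ball x ε) (ball x ε) :=
  fun y hy => (hf y hy).trans_lt hy

theorem tendsto_iterate_of_dist_le_mul {α : Type*} [PseudoMetricSpace α] {f : α → α} {x y : α}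
    {c ε : ℝ} (hc₀ : 0 ≤ c) (hc₁ : c < 1) (hf : ∀ z ∈ ball x ε, dist (f z) x ≤ c * dist z x)
    (hy : y ∈ ball x ε) : Tendsto (fun l => f^[l] y) atTop (𝓝 x) := by
  have hmaps : Set.MapsTo f (ball x ε) (ball x ε) := mapsTo_ball_of_dist_le fun z hz =>
    (hf z hz).trans (mul_le_of_le_one_left dist_nonneg hc₁.le)
  have hgeom (l : ℕ) : dist (f^[l] y) x ≤ c ^ l * dist y x := by
    induction l with
    | zero => simp
    | succ l ih =>
      rw [Function.iterate_succ_apply', pow_succ', mul_assoc]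
      exact (hf _ (hmaps.iterate l hy)).trans (mul_le_mul_of_nonneg_left ih hc₀)
  rw [tendsto_iff_dist_tendsto_zero]
  refine squeeze_zero (fun _ => dist_nonneg) hgeom ?_
  simpa using (tendsto_pow_atTop_nhds_zero_of_lt_one hc₀ hc₁).mul_const (dist y x)

variable {f : ℝ → ℝ} {x y ε : ℝ}

theorem antitone_iterate_of_dist_le (hf : ∀ z ∈ ball x ε, dist (f z) x ≤ dist z x)
    (hge : ∀ z ∈ ball x ε, x ≤ z → x ≤ f z) (hy : y ∈ ball x ε) (hxy : x ≤ y) :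
    Antitone fun l => f^[l] y := by
  refine antitone_iterate_of_mapsTo (s := ball x ε ∩ Set.Ici x) ?_ ?_ ⟨hy, hxy⟩
  · exact fun z ⟨hz, hxz⟩ => ⟨mapsTo_ball_of_dist_le hf hz, hge z hz hxz⟩
  · rintro z ⟨hz, hxz : x ≤ z⟩
    have hdist := hf z hz
    rw [Real.dist_eq, Real.dist_eq, abs_of_nonneg (sub_nonneg.2 hxz)] at hdist
    linarith [le_abs_self (f z - x)]

theorem monotone_iterate_of_dist_le (hf : ∀ z ∈ ball x ε, dist (f z) x ≤ dist z x)
    (hle : ∀ z ∈ ball x ε, z ≤ x → f z ≤ x) (hy : y ∈ ball x ε) (hyx : y ≤ x) :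
    Monotone fun l => f^[l] y := by
  refine monotone_iterate_of_mapsTo (s := ball x ε ∩ Set.Iic x) ?_ ?_ ⟨hy, hyx⟩
  · exact fun z ⟨hz, hzx⟩ => ⟨mapsTo_ball_of_dist_le hf hz, hle z hz hzx⟩
  · rintro z ⟨hz, hzx : z ≤ x⟩
    have hdist := hf z hz
    rw [Real.dist_eq, Real.dist_eq, abs_of_nonpos (sub_nonpos.2 hzx)] at hdist
    linarith [neg_abs_le (f z - x)]

theorem antitone_or_monotone_iterate_succ (hf : ∀ z ∈ ball x ε, dist (f z) x ≤ dist z x)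
    (hside : (∀ z ∈ ball x ε, x ≤ f z) ∨ (∀ z ∈ ball x ε, f z ≤ x) ∨
      ∀ z ∈ ball x ε, 0 ≤ (z - x) * (f z - x)) (hy : y ∈ ball x ε) :
    (Antitone fun l => f^[l + 1] y) ∨ Monotone fun l => f^[l + 1] y := by
  have hfy : f y ∈ ball x ε := mapsTo_ball_of_dist_le hf hy
  rcases hside with hge | hle | hsame
  · exact .inl (antitone_iterate_of_dist_le hf (fun z hz _ => hge z hz) hfy (hge y hy))
  · exact .inr (monotone_iterate_of_dist_le hf (fun z hz _ => hle z hz) hfy (hle y hy))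
  · have hfix : f x = x := by
      have := hf x (mem_ball_self (dist_nonneg.trans_lt hy))
      rwa [dist_self, dist_le_zero] at this
    have hge (z : ℝ) (hz : z ∈ ball x ε) (hxz : x ≤ z) : x ≤ f z := by
      rcases hxz.eq_or_lt with rfl | hlt
      · exact hfix.ge
      · exact sub_nonneg.1 (nonneg_of_mul_nonneg_right (hsame z hz) (sub_pos.2 hlt))
    have hle (z : ℝ) (hz : z ∈ ball x ε) (hzx : z ≤ x) : f z ≤ x := by
      rcases hzx.eq_or_lt with rfl | hlt
      · exact hfix.le
      · exact sub_nonpos.1 (nonpos_of_mul_nonneg_right (hsame z hz) (sub_neg.2 hlt))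
    rcases le_total x y with hxy | hyx
    · exact .inl (antitone_iterate_of_dist_le hf hge hfy (hge y hy hxy))
    · exact .inr (monotone_iterate_of_dist_le hf hle hfy (hle y hy hyx))

variable {R : ℝ → ℝ}

theorem eventually_dist_le_half_of_eq_sq_mul (hf : ∀ᶠ y in 𝓝 x, f y - x = (y - x) ^ 2 * R y)
    (hR : ContinuousAt R x) : ∀ᶠ y in 𝓝 x, dist (f y) x ≤ 1 / 2 * dist y x := by
  have hlim : Tendsto (fun y => |(y - x) * R y|) (𝓝 x) (𝓝 0) := by
    have hcont : ContinuousAt (fun y => |(y - x) * R y|) x := by fun_prop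
    simpa using hcont.tendsto
  filter_upwards [hf, hlim.eventually_le_const one_half_pos] with y hfy hle
  calc dist (f y) x = |(y - x) * R y| * |y - x| := by
        rw [Real.dist_eq, hfy, ← abs_mul]; ring_nf
    _ ≤ 1 / 2 * |y - x| := by gcongr

theorem eventually_side_of_eq_sq_mul (hf : ∀ᶠ y in 𝓝 x, f y - x = (y - x) ^ 2 * R y)
    (hR : ContinuousAt R x) (hR₀ : R x = 0 → ∀ᶠ y in 𝓝 x, 0 ≤ (y - x) * R y) :
    (∀ᶠ y in 𝓝 x, x ≤ f y) ∨ (∀ᶠ y in 𝓝 x, f y ≤ x) ∨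
      ∀ᶠ y in 𝓝 x, 0 ≤ (y - x) * (f y - x) := by
  rcases lt_trichotomy (R x) 0 with hneg | hzero | hpos
  · right; left
    filter_upwards [hf, hR.eventually_le_const hneg] with y hfy hRy
    exact sub_nonpos.1 (hfy ▸ mul_nonpos_of_nonneg_of_nonpos (sq_nonneg _) hRy)
  · right; right
    filter_upwards [hf, hR₀ hzero] with y hfy hRy
    calc 0 ≤ (y - x) ^ 2 * ((y - x) * R y) := mul_nonneg (sq_nonneg _) hRy
      _ = (y - x) * (f y - x) := by rw [hfy]; ring
  · left
    filter_upwards [hf, hR.eventually_const_le hpos] with y hfy hRy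
    exact sub_nonneg.1 (hfy ▸ mul_nonneg (sq_nonneg _) hRy)

theorem eventually_antitoneOn_or_monotoneOn_iterate_and_tendsto
    (hf : ∀ᶠ y in 𝓝 x, f y - x = (y - x) ^ 2 * R y) (hR : ContinuousAt R x)
    (hR₀ : R x = 0 → ∀ᶠ y in 𝓝 x, 0 ≤ (y - x) * R y) :
    ∀ᶠ y in 𝓝 x, (AntitoneOn (fun l => f^[l] y) (Set.Ici 1) ∨
      MonotoneOn (fun l => f^[l] y) (Set.Ici 1)) ∧ Tendsto (fun l => f^[l] y) atTop (𝓝 x) := by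
  have hhalf := eventually_dist_le_half_of_eq_sq_mul hf hR
  obtain ⟨ε, hε, hball⟩ : ∃ ε > 0, (∀ y ∈ ball x ε, dist (f y) x ≤ 1 / 2 * dist y x) ∧
      ((∀ y ∈ ball x ε, x ≤ f y) ∨ (∀ y ∈ ball x ε, f y ≤ x) ∨
        ∀ y ∈ ball x ε, 0 ≤ (y - x) * (f y - x)) := by
    rcases eventually_side_of_eq_sq_mul hf hR hR₀ with h | h | h <;>
    · obtain ⟨ε, hε, hball⟩ := eventually_nhds_iff_ball.1 (hhalf.and h)
      have hside := fun y hy => (hball y hy).2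
      exact ⟨ε, hε, fun y hy => (hball y hy).1, by tauto⟩
  filter_upwards [ball_mem_nhds x hε] with y hy
  have hnonexp : ∀ z ∈ ball x ε, dist (f z) x ≤ dist z x := fun z hz =>
    (hball.1 z hz).trans (mul_le_of_le_one_left dist_nonneg (by norm_num))
  exact ⟨(antitone_or_monotone_iterate_succ hnonexp hball.2 hy).imp
      antitone_add_nat_iff_antitoneOn_nat_Ici.1 monotone_add_nat_iff_monotoneOn_nat_Ici.1,
    tendsto_iterate_of_dist_le_mul (by norm_num) (by norm_num) hball.1 hy⟩

end Iteration

/-! ### Means with inverse square weights -/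

section InverseSquareMean

variable {ι : Type*} [DecidableEq ι] {s : Finset ι} {w x : ι → ℝ} {i : ι}

/-- If the weights `q j` are proportional to `w j / (y - x j) ^ 2`, then the weighted mean of the
nodes `x j`, `j ∈ s`, equals `x i + (y - x i) ^ 2 * quadRate s w x i y`. The pole at `y = x i` has
been cleared from numerator and denominator, so that no junk value occurs for `y` close to `x i`. -/
noncomputable def quadRate (s : Finset ι) (w x : ι → ℝ) (i : ι) (y : ℝ) : ℝ :=
  (∑ j ∈ s.erase i, w j * ((x j - x i) / (y - x j) ^ 2)) /
    (w i + (y - x i) ^ 2 * ∑ j ∈ s.erase i, w j / (y - x j) ^ 2)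

theorem quadRate_denom_pos (hwi : 0 < w i) (hw : ∀ j ∈ s, 0 ≤ w j) (y : ℝ) :
    0 < w i + (y - x i) ^ 2 * ∑ j ∈ s.erase i, w j / (y - x j) ^ 2 :=
  add_pos_of_pos_of_nonneg hwi <| mul_nonneg (sq_nonneg _) <| Finset.sum_nonneg fun j hj =>
    div_nonneg (hw j (Finset.mem_of_mem_erase hj)) (sq_nonneg _)

theorem weightedMean_sub_eq_sq_mul_quadRate {q : ι → ℝ} {c y : ℝ} (hi : i ∈ s) (hwi : 0 < w i)
    (hw : ∀ j ∈ s, 0 ≤ w j) (hq : ∀ j ∈ s, q j * (y - x j) ^ 2 = c * w j)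
    (hsum : ∑ j ∈ s, q j ≠ 0) (hy : ∀ j ∈ s.erase i, y ≠ x j) :
    (∑ j ∈ s, x j * q j) / (∑ j ∈ s, q j) - x i = (y - x i) ^ 2 * quadRate s w x i y := by
  have hqj : ∀ j ∈ s.erase i, q j = c * (w j / (y - x j) ^ 2) := fun j hj => by
    have hne : y - x j ≠ 0 := sub_ne_zero.2 (hy j hj)
    rw [← mul_div_assoc, eq_div_iff (pow_ne_zero 2 hne), hq j (Finset.mem_of_mem_erase hj)]
  have hnum : ∑ j ∈ s, x j * q j - x i * ∑ j ∈ s, q j =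
      c * ∑ j ∈ s.erase i, w j * ((x j - x i) / (y - x j) ^ 2) := by
    rw [Finset.mul_sum, ← Finset.sum_sub_distrib, ← Finset.add_sum_erase s _ hi, sub_self, zero_add,
      Finset.mul_sum]
    refine Finset.sum_congr rfl fun j hj => ?_
    rw [hqj j hj]; ring
  have hden : (y - x i) ^ 2 * ∑ j ∈ s, q j =
      c * (w i + (y - x i) ^ 2 * ∑ j ∈ s.erase i, w j / (y - x j) ^ 2) := by
    rw [← Finset.add_sum_erase s _ hi, Finset.sum_congr rfl hqj, ← Finset.mul_sum, mul_add,
      mul_comm _ (q i), hq i hi]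
    ring
  have hD := (quadRate_denom_pos (s := s) (x := x) hwi hw y).ne'
  rw [quadRate, div_sub' hsum, mul_comm _ (x i), hnum, ← mul_div_assoc, div_eq_div_iff hsum hD,
    mul_right_comm _ _ (∑ j ∈ s, q j), hden]
  ring

theorem continuousAt_quadRate (hwi : 0 < w i) (hw : ∀ j ∈ s, 0 ≤ w j)
    (hx : ∀ j ∈ s.erase i, x i ≠ x j) : ContinuousAt (quadRate s w x i) (x i) := by
  have hpole : ∀ j ∈ s.erase i, (x i - x j) ^ 2 ≠ 0 := fun j hj =>
    pow_ne_zero 2 (sub_ne_zero.2 (hx j hj))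
  refine ContinuousAt.div ?_ (.add (by fun_prop) (.mul (by fun_prop) ?_))
    (quadRate_denom_pos hwi hw _).ne'
  all_goals exact tendsto_finsetSum _ fun j hj =>
    ContinuousAt.tendsto (by fun_prop (disch := exact hpole j hj))

theorem eventually_sub_mul_inv_sq_sub_nonneg {a b : ℝ} (hab : a ≠ b) :
    ∀ᶠ y in 𝓝 a, 0 ≤ (y - a) * ((b - a) / (y - b) ^ 2 - (b - a) / (a - b) ^ 2) := by
  have hnear : ∀ᶠ y in 𝓝 a, 0 < (a - b) * (y + a - 2 * b) := by
    have hcont : ContinuousAt (fun y => (a - b) * (y + a - 2 * b)) a := by fun_prop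
    refine hcont.eventually_const_lt ?_
    linarith [sq_pos_of_ne_zero (sub_ne_zero.2 hab)]
  filter_upwards [hnear, eventually_ne_nhds hab] with y hpos hyb
  have hy : y - b ≠ 0 := sub_ne_zero.2 hyb
  have ha : a - b ≠ 0 := sub_ne_zero.2 hab
  have hfactor : (y - a) * ((b - a) / (y - b) ^ 2 - (b - a) / (a - b) ^ 2) =
      (y - a) ^ 2 * ((a - b) * (y + a - 2 * b)) / ((y - b) ^ 2 * (a - b) ^ 2) := by
    field_simp
    ring
  rw [hfactor]
  positivity

theorem eventually_sub_mul_quadRate_nonneg (hwi : 0 < w i) (hw : ∀ j ∈ s, 0 ≤ w j)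
    (hx : ∀ j ∈ s.erase i, x i ≠ x j) (hzero : quadRate s w x i (x i) = 0) :
    ∀ᶠ y in 𝓝 (x i), 0 ≤ (y - x i) * quadRate s w x i y := by
  have hnum₀ : ∑ j ∈ s.erase i, w j * ((x j - x i) / (x i - x j) ^ 2) = 0 :=
    (div_eq_zero_iff.1 hzero).resolve_right (quadRate_denom_pos hwi hw _).ne'
  have hterms := (eventually_all_finset (s.erase i)).2 fun j hj =>
    eventually_sub_mul_inv_sq_sub_nonneg (hx j hj)
  filter_upwards [hterms] with y hy
  have hnum : 0 ≤ (y - x i) * ∑ j ∈ s.erase i, w j * ((x j - x i) / (y - x j) ^ 2) := by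
    calc 0 ≤ ∑ j ∈ s.erase i, w j *
          ((y - x i) * ((x j - x i) / (y - x j) ^ 2 - (x j - x i) / (x i - x j) ^ 2)) :=
          Finset.sum_nonneg fun j hj =>
            mul_nonneg (hw j (Finset.mem_of_mem_erase hj)) (hy j hj)
      _ = (y - x i) * (∑ j ∈ s.erase i, w j * ((x j - x i) / (y - x j) ^ 2) -
          ∑ j ∈ s.erase i, w j * ((x j - x i) / (x i - x j) ^ 2)) := by
          rw [← Finset.sum_sub_distrib, Finset.mul_sum]
          exact Finset.sum_congr rfl fun j _ => by ring
      _ = _ := by rw [hnum₀, sub_zero]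
  rw [quadRate, ← mul_div_assoc]
  exact div_nonneg hnum (quadRate_denom_pos hwi hw y).le

end InverseSquareMean

/-! ### Parseval's identity in `L²(π)` -/

section Parseval

theorem sum_inner_mul_inner_div_norm_sq {𝕜 E ι : Type*} [RCLike 𝕜] [NormedAddCommGroup E]
    [InnerProductSpace 𝕜 E] [FiniteDimensional 𝕜 E] [Fintype ι] {v : ι → E} (hv : ∀ j, v j ≠ 0)
    (horth : Pairwise fun i j => inner 𝕜 (v i) (v j) = 0)
    (hcard : Fintype.card ι = Module.finrank 𝕜 E) (x y : E) :
    ∑ j, inner 𝕜 x (v j) * inner 𝕜 (v j) y / (‖v j‖ : 𝕜) ^ 2 = inner 𝕜 x y := by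
  have hon : Orthonormal 𝕜 fun j => (‖v j‖⁻¹ : 𝕜) • v j :=
    ⟨fun j => norm_smul_inv_norm (hv j), fun i j hij => by
      simp only [inner_smul_left, inner_smul_right, horth hij, mul_zero]⟩
  have hspan := hon.linearIndependent.span_eq_top_of_card_eq_finrank' hcard
  rw [← (OrthonormalBasis.mk hon hspan.ge).sum_inner_mul_inner x y]
  refine Finset.sum_congr rfl fun j _ => ?_
  rw [OrthonormalBasis.coe_mk, inner_smul_left, inner_smul_right, map_inv₀, RCLike.conj_ofReal]
  ring

variable {n : ℕ} {π : ℕ → ℝ}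

/-- The isometry from `L²(π)` to Euclidean space, for `π ≥ 0`: `f` is sent to the vector with
coordinates `√(π k) * f k`. -/
noncomputable def weightedVec (n : ℕ) (π f : ℕ → ℝ) : EuclideanSpace ℝ (Finset.Icc 1 n) :=
  WithLp.toLp 2 fun k => √(π k) * f k

theorem inner_weightedVec (hπ : ∀ k ∈ Finset.Icc 1 n, 0 ≤ π k) (f g : ℕ → ℝ) :
    inner ℝ (weightedVec n π f) (weightedVec n π g) = piMean n π (f * g) := by
  rw [piMean, ← Finset.sum_coe_sort, PiLp.inner_apply]
  refine Finset.sum_congr rfl fun k _ => ?_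
  calc √(π k) * g k * (√(π k) * f k) = f k * g k * (√(π k) * √(π k)) := by ring
    _ = (f * g) k * π k := by rw [Real.mul_self_sqrt (hπ k k.2), Pi.mul_apply]

theorem piMean_mul_self_pos (hπ : ∀ k ∈ Finset.Icc 1 n, 0 < π k) {f : ℕ → ℝ}
    (hf : ∃ k ∈ Finset.Icc 1 n, f k ≠ 0) : 0 < piMean n π (f * f) := by
  obtain ⟨k, hk, hfk⟩ := hf
  exact Finset.sum_pos' (fun m hm => mul_nonneg (mul_self_nonneg _) (hπ m hm).le)
    ⟨k, hk, mul_pos (mul_self_pos.2 hfk) (hπ k hk)⟩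

theorem sum_piMean_mul_piMean_div {ι : Type*} {s : Finset ι} {e : ι → ℕ → ℝ}
    (hπ : ∀ k ∈ Finset.Icc 1 n, 0 < π k) (he : ∀ j ∈ s, ∃ k ∈ Finset.Icc 1 n, e j k ≠ 0)
    (horth : (s : Set ι).Pairwise fun i j => piMean n π (e i * e j) = 0) (hcard : #s = n)
    (f g : ℕ → ℝ) :
    ∑ j ∈ s, piMean n π (f * e j) * piMean n π (e j * g) / piMean n π (e j * e j) =
      piMean n π (f * g) := by
  have hinner := inner_weightedVec (π := π) fun k hk => (hπ k hk).le
  have hnorm (j : ι) : ‖weightedVec n π (e j)‖ ^ 2 = piMean n π (e j * e j) := by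
    rw [← hinner, real_inner_self_eq_norm_sq]
  have hne (j : s) : weightedVec n π (e j) ≠ 0 := fun h0 =>
    (piMean_mul_self_pos hπ (he j j.2)).ne' (by rw [← hnorm, h0, norm_zero, zero_pow two_ne_zero])
  have horth' : Pairwise fun i j : s =>
      inner ℝ (weightedVec n π (e i)) (weightedVec n π (e j)) = 0 := fun i j hij =>
    (hinner _ _).trans (horth i.2 j.2 (Subtype.coe_injective.ne hij))
  rw [← hinner f g, ← sum_inner_mul_inner_div_norm_sq hne horth' (by simp [hcard]),
    ← Finset.sum_coe_sort]
  simp only [hinner, RCLike.ofReal_real_eq_id, id, hnorm]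

end Parseval

/-! ### The variance -/

section Variance

variable {n : ℕ} {π : ℕ → ℝ}

theorem varPi_eq_piMean_sub_sq (hπ1 : ∑ k ∈ Finset.Icc 1 n, π k = 1) (f : ℕ → ℝ) :
    varPi n π f = piMean n π fun k => (f k - piMean n π f) ^ 2 := by
  have hexpand (m : ℝ) : piMean n π (fun k => (f k - m) ^ 2) =
      piMean n π (fun k => f k ^ 2) - 2 * m * piMean n π f + m ^ 2 * ∑ k ∈ Finset.Icc 1 n, π k := by
    simp only [piMean, Finset.mul_sum, ← Finset.sum_sub_distrib, ← Finset.sum_add_distrib]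
    exact Finset.sum_congr rfl fun k _ => by ring
  rw [hexpand, hπ1, varPi]
  ring

theorem Nonconstant.varPi_pos {f : ℕ → ℝ} (hf : Nonconstant n f)
    (hπ : ∀ k ∈ Finset.Icc 1 n, 0 < π k) (hπ1 : ∑ k ∈ Finset.Icc 1 n, π k = 1) :
    0 < varPi n π f := by
  obtain ⟨i, hi, j, hj, hij⟩ := hf
  obtain ⟨k, hk, hfk⟩ : ∃ k ∈ Finset.Icc 1 n, f k - piMean n π f ≠ 0 := by
    by_contra! hconst
    exact hij ((sub_eq_zero.1 (hconst i hi)).trans (sub_eq_zero.1 (hconst j hj)).symm)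
  rw [varPi_eq_piMean_sub_sq hπ1]
  exact Finset.sum_pos' (fun m hm => mul_nonneg (sq_nonneg _) (hπ m hm).le)
    ⟨k, hk, mul_pos (sq_pos_of_ne_zero hfk) (hπ k hk)⟩

end Variance

/-! ### The path Laplacian and its eigenvectors -/

section Laplacian

variable {n : ℕ} {π ν : ℕ → ℝ}

/-- The action of the matrix `M^G_{π,ν}` on functions. The neighbours `0` and `n + 1` of the
endpoints do not contribute as long as `ν 0 = ν n = 0`. -/
noncomputable def pathLaplacian (π ν f : ℕ → ℝ) (k : ℕ) : ℝ :=
  ((f k - f (k - 1)) * ν (k - 1) + (f k - f (k + 1)) * ν k) / π k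

theorem EForm_comm (f g : ℕ → ℝ) : EForm n ν f g = EForm n ν g f :=
  Finset.sum_congr rfl fun k _ => by ring

theorem sum_Icc_mul_sub_pred (f h : ℕ → ℝ) (m : ℕ) :
    ∑ k ∈ Finset.Icc 1 (m + 1), f k * (h k - h (k - 1)) =
      ∑ k ∈ Finset.Icc 1 m, (f k - f (k + 1)) * h k + f (m + 1) * h (m + 1) - f 1 * h 0 := by
  induction m with
  | zero =>
    rw [Finset.Icc_self, Finset.sum_singleton, Finset.Icc_eq_empty_of_lt one_pos, Finset.sum_empty]
    ring
  | succ m ih =>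
    rw [Finset.sum_Icc_succ_top (by lia), ih, Finset.sum_Icc_succ_top (by lia),
      Nat.add_sub_cancel]
    ring

theorem EForm_eq_piMean_mul_pathLaplacian (hn : 1 ≤ n) (hπ : ∀ k ∈ Finset.Icc 1 n, 0 < π k)
    (hν0 : ν 0 = 0) (hνn : ν n = 0) (f g : ℕ → ℝ) :
    EForm n ν f g = piMean n π (f * pathLaplacian π ν g) := by
  have hparts := sum_Icc_mul_sub_pred f (fun k => (g k - g (k + 1)) * ν k) (n - 1)
  simp only [Nat.sub_add_cancel hn, hν0, hνn, mul_zero, add_zero, sub_zero] at hparts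
  rw [EForm, Finset.sum_congr rfl fun k _ => mul_assoc _ _ _, ← hparts]
  refine Finset.sum_congr rfl fun k hk => ?_
  rw [Pi.mul_apply, pathLaplacian, mul_assoc, div_mul_cancel₀ _ (hπ k hk).ne',
    Nat.sub_add_cancel (Finset.mem_Icc.1 hk).1]
  ring

theorem IsEigen.EForm_eq {lam : ℝ} {ζ : ℕ → ℝ} (hζ : IsEigen n π ν lam ζ) (hn : 1 ≤ n)
    (hπ : ∀ k ∈ Finset.Icc 1 n, 0 < π k) (hν0 : ν 0 = 0) (hνn : ν n = 0) (f : ℕ → ℝ) :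
    EForm n ν f ζ = lam * piMean n π (f * ζ) := by
  rw [EForm_eq_piMean_mul_pathLaplacian hn hπ hν0 hνn, piMean, piMean, Finset.mul_sum]
  refine Finset.sum_congr rfl fun k hk => ?_
  rw [Pi.mul_apply, pathLaplacian, ← hζ.2 k hk, mul_assoc, div_mul_cancel₀ _ (hπ k hk).ne',
    Pi.mul_apply]
  ring

theorem IsEigen.piMean_mul_eq_zero {lam μ : ℝ} {ζ η : ℕ → ℝ} (hζ : IsEigen n π ν lam ζ)
    (hη : IsEigen n π ν μ η) (hne : lam ≠ μ) (hn : 1 ≤ n) (hπ : ∀ k ∈ Finset.Icc 1 n, 0 < π k)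
    (hν0 : ν 0 = 0) (hνn : ν n = 0) : piMean n π (ζ * η) = 0 := by
  have hsymm : lam * piMean n π (ζ * η) = μ * piMean n π (ζ * η) := by
    rw [← hη.EForm_eq hn hπ hν0 hνn ζ, mul_comm ζ η, ← hζ.EForm_eq hn hπ hν0 hνn η, EForm_comm]
  exact (mul_eq_mul_right_iff.1 hsymm).resolve_left hne

theorem IsEigen.apply_last_ne_zero {lam : ℝ} {ζ : ℕ → ℝ} (hζ : IsEigen n π ν lam ζ)
    (hν : ∀ k ∈ Finset.Icc 1 (n - 1), 0 < ν k) (hνn : ν n = 0) : ζ n ≠ 0 := by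
  intro hlast
  obtain ⟨⟨k, hk, hζk⟩, heq⟩ := hζ
  have hk := Finset.mem_Icc.1 hk
  -- Cauchy data at the last vertex determine `ζ`, by running the recursion backwards.
  suffices hzero : ζ k = 0 ∧ (ζ k - ζ (k + 1)) * ν k = 0 from hζk hzero.1
  refine Nat.decreasingInduction' (P := fun m => ζ m = 0 ∧ (ζ m - ζ (m + 1)) * ν m = 0)
    (fun m hmn hkm ⟨hζm, hflow⟩ => ?_) hk.2 ⟨hlast, by rw [hνn, mul_zero]⟩
  have hm := heq (m + 1) (Finset.mem_Icc.2 ⟨by lia, hmn⟩)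
  rw [hflow, hζm, Nat.add_sub_cancel] at hm
  have hνm : ν m ≠ 0 := (hν m (Finset.mem_Icc.2 ⟨by lia, by lia⟩)).ne'
  have hζm' : ζ m = 0 := (mul_eq_zero.1 (by linarith : ζ m * ν m = 0)).resolve_right hνm
  exact ⟨hζm', by rw [hζm', hζm, sub_zero, zero_mul]⟩

theorem isEigen_zero_one (hn : 1 ≤ n) : IsEigen n π ν 0 1 :=
  ⟨⟨1, Finset.mem_Icc.2 ⟨le_rfl, hn⟩, one_ne_zero⟩, fun k _ => by simp⟩

/-- The squared norm in `L²(π)` of the orthogonal projection of `f` onto the line spanned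
by `ζ`. -/
noncomputable def spectralWeight (n : ℕ) (π ζ f : ℕ → ℝ) : ℝ :=
  piMean n π (f * ζ) ^ 2 / piMean n π (ζ * ζ)

/-- Eigenvectors `ζ 0, …, ζ (n - 1)` for the distinct eigenvalues `lam 0, …, lam (n - 1)`, starting
with the constant function `1`. Being `n` in number, they form an orthogonal basis of `L²(π)`. -/
structure IsEigenbasis (n : ℕ) (π ν lam : ℕ → ℝ) (ζ : ℕ → ℕ → ℝ) : Prop where
  injOn : Set.InjOn lam (Finset.range n)
  isEigen : ∀ j ∈ Finset.range n, IsEigen n π ν (lam j) (ζ j)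
  zero_eq_one : ζ 0 = 1

theorem exists_isEigenbasis {lam : ℕ → ℝ} (hn : 1 ≤ n) (hlam0 : lam 0 = 0)
    (hinj : Set.InjOn lam (Finset.range n))
    (heig : ∀ j ∈ Finset.range n, ∃ ζ : ℕ → ℝ, IsEigen n π ν (lam j) ζ) :
    ∃ ζ, IsEigenbasis n π ν lam ζ := by
  choose! ζ hζ using heig
  refine ⟨Function.update ζ 0 1, hinj, fun j hj => ?_, Function.update_self ..⟩
  rcases eq_or_ne j 0 with rfl | hj0
  · rw [Function.update_self, hlam0]
    exact isEigen_zero_one hn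
  · rw [Function.update_of_ne hj0]
    exact hζ j hj

namespace IsEigenbasis

variable {lam : ℕ → ℝ} {ζ : ℕ → ℕ → ℝ}

theorem sum_piMean_mul_piMean_div (hb : IsEigenbasis n π ν lam ζ) (hn : 1 ≤ n)
    (hπ : ∀ k ∈ Finset.Icc 1 n, 0 < π k) (hν0 : ν 0 = 0) (hνn : ν n = 0) (f g : ℕ → ℝ) :
    ∑ j ∈ Finset.range n,
        piMean n π (f * ζ j) * piMean n π (ζ j * g) / piMean n π (ζ j * ζ j) =
      piMean n π (f * g) :=
  _root_.sum_piMean_mul_piMean_div hπ (fun j hj => (hb.isEigen j hj).1)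
    (fun i hi j hj hij => (hb.isEigen i hi).piMean_mul_eq_zero (hb.isEigen j hj)
      (hb.injOn.ne hi hj hij) hn hπ hν0 hνn) (Finset.card_range n) f g

theorem EForm_self_eq_sum (hb : IsEigenbasis n π ν lam ζ) (hn : 1 ≤ n)
    (hπ : ∀ k ∈ Finset.Icc 1 n, 0 < π k) (hν0 : ν 0 = 0) (hνn : ν n = 0) (f : ℕ → ℝ) :
    EForm n ν f f = ∑ j ∈ Finset.range n, lam j * spectralWeight n π (ζ j) f := by
  rw [EForm_eq_piMean_mul_pathLaplacian hn hπ hν0 hνn,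
    ← hb.sum_piMean_mul_piMean_div hn hπ hν0 hνn]
  refine Finset.sum_congr rfl fun j hj => ?_
  rw [← EForm_eq_piMean_mul_pathLaplacian hn hπ hν0 hνn, EForm_comm,
    (hb.isEigen j hj).EForm_eq hn hπ hν0 hνn, spectralWeight]
  ring

theorem varPi_eq_sum (hb : IsEigenbasis n π ν lam ζ) (hn : 1 ≤ n)
    (hπ : ∀ k ∈ Finset.Icc 1 n, 0 < π k) (hπ1 : ∑ k ∈ Finset.Icc 1 n, π k = 1)
    (hν0 : ν 0 = 0) (hνn : ν n = 0) (f : ℕ → ℝ) :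
    varPi n π f = ∑ j ∈ (Finset.range n).erase 0, spectralWeight n π (ζ j) f := by
  have hmean : spectralWeight n π (ζ 0) f = piMean n π f ^ 2 := by
    have hone : piMean n π 1 = 1 := by simpa only [piMean, Pi.one_apply, one_mul] using hπ1
    rw [spectralWeight, hb.zero_eq_one, mul_one, mul_one, hone, div_one]
  have hsq : piMean n π (fun k => f k ^ 2) =
      ∑ j ∈ Finset.range n, spectralWeight n π (ζ j) f := by
    calc piMean n π (fun k => f k ^ 2) = piMean n π (f * f) := by simp only [pow_two]; rfl
      _ = _ := (hb.sum_piMean_mul_piMean_div hn hπ hν0 hνn f f).symm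
      _ = _ := Finset.sum_congr rfl fun j _ => by rw [mul_comm (ζ j) f, ← pow_two, spectralWeight]
  rw [varPi, hsq, Finset.sum_erase_eq_sub (Finset.mem_range.2 hn), hmean]

end IsEigenbasis

end Laplacian

/-! ### The function `ξ_λ` -/

section Xi

variable {n : ℕ} {π ν ξ : ℕ → ℝ} {y : ℝ}

/-- The weight `ζ(n)² / π(ζ²)` with which the eigenvector `ζ` enters the spectral expansion
of `ξ_λ`. -/
noncomputable def endpointWeight (n : ℕ) (π ζ : ℕ → ℝ) : ℝ :=
  ζ n ^ 2 / piMean n π (ζ * ζ)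

theorem IsEigen.endpointWeight_pos {lam : ℝ} {ζ : ℕ → ℝ} (hζ : IsEigen n π ν lam ζ)
    (hπ : ∀ k ∈ Finset.Icc 1 n, 0 < π k) (hν : ∀ k ∈ Finset.Icc 1 (n - 1), 0 < ν k)
    (hνn : ν n = 0) : 0 < endpointWeight n π ζ :=
  div_pos (sq_pos_of_ne_zero (hζ.apply_last_ne_zero hν hνn)) (piMean_mul_self_pos hπ hζ.1)

namespace XiRec

theorem nonconstant (hξ : XiRec n π ν y ξ) (hn : 2 ≤ n) (hy : y ≠ 0) (hπ1 : π 1 ≠ 0)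
    (hν0 : ν 0 = 0) (hν1 : ν 1 ≠ 0) : Nonconstant n ξ := by
  refine ⟨1, Finset.mem_Icc.2 ⟨le_rfl, by lia⟩, 2, Finset.mem_Icc.2 ⟨by lia, hn⟩, ?_⟩
  have hstep : ξ 2 = ξ 1 + y * π 1 / ν 1 := by
    rw [hξ.2 1 le_rfl hn, Nat.sub_self, hν0, hξ.1]
    ring
  rw [hstep, ne_comm, Ne, add_eq_left]
  exact div_ne_zero (mul_ne_zero hy hπ1) hν1

theorem pathLaplacian_eq (hξ : XiRec n π ν y ξ) {k : ℕ} (hk : 1 ≤ k) (hkn : k < n)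
    (hπ : π k ≠ 0) (hν : ν k ≠ 0) : pathLaplacian π ν ξ k = y * ξ k := by
  rw [pathLaplacian, hξ.2 k hk hkn]
  field_simp
  ring

theorem sub_mul_piMean_eq {lam : ℝ} {ζ : ℕ → ℝ} (hξ : XiRec n π ν y ξ)
    (hζ : IsEigen n π ν lam ζ) (hn : 1 ≤ n) (hπ : ∀ k ∈ Finset.Icc 1 n, 0 < π k)
    (hν : ∀ k ∈ Finset.Icc 1 (n - 1), 0 < ν k) (hν0 : ν 0 = 0) (hνn : ν n = 0) :
    (y - lam) * piMean n π (ξ * ζ) = (y * ξ n - pathLaplacian π ν ξ n) * π n * ζ n := by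
  have hn_mem : n ∈ Finset.Icc 1 n := Finset.mem_Icc.2 ⟨hn, le_rfl⟩
  calc (y - lam) * piMean n π (ξ * ζ)
      = y * piMean n π (ξ * ζ) - piMean n π (ζ * pathLaplacian π ν ξ) := by
        rw [← EForm_eq_piMean_mul_pathLaplacian hn hπ hν0 hνn, EForm_comm,
          hζ.EForm_eq hn hπ hν0 hνn, sub_mul]
    _ = ∑ k ∈ Finset.Icc 1 n, (y * ξ k - pathLaplacian π ν ξ k) * π k * ζ k := by
        simp only [piMean, Pi.mul_apply, Finset.mul_sum, ← Finset.sum_sub_distrib]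
        exact Finset.sum_congr rfl fun k _ => by ring
    _ = (y * ξ n - pathLaplacian π ν ξ n) * π n * ζ n := by
        refine Finset.sum_eq_single_of_mem n hn_mem fun k hk hkn => ?_
        have hk' := Finset.mem_Icc.1 hk
        rw [hξ.pathLaplacian_eq hk'.1 (by lia) (hπ k hk).ne'
          (hν k (Finset.mem_Icc.2 ⟨hk'.1, by lia⟩)).ne', sub_self, zero_mul, zero_mul]

theorem rayleigh_sub_eq_sq_mul_quadRate {lam : ℕ → ℝ} {ζ : ℕ → ℕ → ℝ} {i : ℕ}
    (hξ : XiRec n π ν y ξ) (hb : IsEigenbasis n π ν lam ζ) (hlam0 : lam 0 = 0)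
    (hπ : ∀ k ∈ Finset.Icc 1 n, 0 < π k) (hπ1 : ∑ k ∈ Finset.Icc 1 n, π k = 1)
    (hν : ∀ k ∈ Finset.Icc 1 (n - 1), 0 < ν k) (hν0 : ν 0 = 0) (hνn : ν n = 0)
    (hi : i ∈ (Finset.range n).erase 0) (hy : y ≠ 0)
    (hne : ∀ j ∈ ((Finset.range n).erase 0).erase i, y ≠ lam j) :
    EForm n ν ξ ξ / varPi n π ξ - lam i = (y - lam i) ^ 2 *
      quadRate ((Finset.range n).erase 0) (fun j => endpointWeight n π (ζ j)) lam i y := by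
  obtain ⟨hi0, hin⟩ : i ≠ 0 ∧ i < n := by simpa using hi
  have hn : 1 ≤ n := by lia
  have hw : ∀ j ∈ (Finset.range n).erase 0, 0 < endpointWeight n π (ζ j) := fun j hj =>
    (hb.isEigen j (Finset.mem_of_mem_erase hj)).endpointWeight_pos hπ hν hνn
  have hvar : varPi n π ξ ≠ 0 := by
    have hν_one : ν 1 ≠ 0 := (hν 1 (Finset.mem_Icc.2 ⟨le_rfl, by lia⟩)).ne'
    have hπ_one : π 1 ≠ 0 := (hπ 1 (Finset.mem_Icc.2 ⟨le_rfl, hn⟩)).ne'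
    exact ((hξ.nonconstant (by lia) hy hπ_one hν0 hν_one).varPi_pos hπ hπ1).ne'
  have hweight : ∀ j ∈ (Finset.range n).erase 0, spectralWeight n π (ζ j) ξ * (y - lam j) ^ 2 =
      ((y * ξ n - pathLaplacian π ν ξ n) * π n) ^ 2 * endpointWeight n π (ζ j) := fun j hj => by
    have hj := hb.isEigen j (Finset.mem_of_mem_erase hj)
    rw [spectralWeight, div_mul_eq_mul_div, ← mul_pow, mul_comm,
      hξ.sub_mul_piMean_eq hj hn hπ hν hν0 hνn, endpointWeight]
    ring
  have henergy : EForm n ν ξ ξ =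
      ∑ j ∈ (Finset.range n).erase 0, lam j * spectralWeight n π (ζ j) ξ := by
    rw [hb.EForm_self_eq_sum hn hπ hν0 hνn, Finset.sum_erase _ (by rw [hlam0, zero_mul])]
  have hvar_eq := hb.varPi_eq_sum hn hπ hπ1 hν0 hνn ξ
  rw [henergy, hvar_eq]
  exact weightedMean_sub_eq_sq_mul_quadRate hi (hw i hi) (fun j hj => (hw j hj).le) hweight
    (hvar_eq ▸ hvar) hne

end XiRec

end Xi

theorem IsEigenbasis.eventually_iterate_rayleigh {n : ℕ} {π ν lam : ℕ → ℝ} {ζ : ℕ → ℕ → ℝ}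
    {ξ : ℝ → ℕ → ℝ} {i : ℕ} {L : ℝ → ℝ} (hb : IsEigenbasis n π ν lam ζ) (hlam0 : lam 0 = 0)
    (hπ : ∀ k ∈ Finset.Icc 1 n, 0 < π k) (hπ1 : ∑ k ∈ Finset.Icc 1 n, π k = 1)
    (hν : ∀ k ∈ Finset.Icc 1 (n - 1), 0 < ν k) (hν0 : ν 0 = 0) (hνn : ν n = 0)
    (hξ : ∀ y, XiRec n π ν y (ξ y)) (hi : i ∈ (Finset.range n).erase 0)
    (hL : ∀ y, L y = EForm n ν (ξ y) (ξ y) / varPi n π (ξ y)) :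
    ∀ᶠ y in 𝓝 (lam i), (AntitoneOn (fun l => L^[l] y) (Set.Ici 1) ∨
      MonotoneOn (fun l => L^[l] y) (Set.Ici 1)) ∧
        Tendsto (fun l => L^[l] y) atTop (𝓝 (lam i)) := by
  have hw : ∀ j ∈ (Finset.range n).erase 0, 0 < endpointWeight n π (ζ j) := fun j hj =>
    (hb.isEigen j (Finset.mem_of_mem_erase hj)).endpointWeight_pos hπ hν hνn
  have hw_nonneg := fun j hj => (hw j hj).le
  have hsimple : ∀ j ∈ Finset.range n, j ≠ i → lam i ≠ lam j := fun j hj hji =>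
    hb.injOn.ne (Finset.mem_of_mem_erase hi) hj hji.symm
  have hne : ∀ j ∈ ((Finset.range n).erase 0).erase i, lam i ≠ lam j := fun j hj =>
    hsimple j (Finset.mem_of_mem_erase (Finset.mem_of_mem_erase hj)) (Finset.ne_of_mem_erase hj)
  have hlam_ne : lam i ≠ 0 := hlam0 ▸
    hsimple 0 (Finset.mem_range.2 (by grind)) (Finset.ne_of_mem_erase hi).symm
  refine eventually_antitoneOn_or_monotoneOn_iterate_and_tendsto ?_
    (continuousAt_quadRate (hw i hi) hw_nonneg hne)
    (eventually_sub_mul_quadRate_nonneg (hw i hi) hw_nonneg hne)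
  filter_upwards [eventually_ne_nhds hlam_ne, (eventually_all_finset _).2 fun j hj =>
    eventually_ne_nhds (hne j hj)] with y hy hyne
  rw [hL]
  exact (hξ y).rayleigh_sub_eq_sq_mul_quadRate hb hlam0 hπ hπ1 hν hν0 hνn hi hy hyne

theorem stmt11 (n : ℕ) (hn : 3 ≤ n) (π ν : ℕ → ℝ)
    (hπ : ∀ k ∈ Finset.Icc 1 n, 0 < π k)
    (hπ1 : ∑ k ∈ Finset.Icc 1 n, π k = 1)
    (hν : ∀ k ∈ Finset.Icc 1 (n - 1), 0 < ν k)
    (hν0 : ν 0 = 0) (hνn : ν n = 0)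
    -- the (simple) eigenvalues `0 = λ^G_0 < λ^G_1 < ⋯ < λ^G_{n−1}` of `M^G_{π,ν}`
    (lamG : ℕ → ℝ) (hlamG0 : lamG 0 = 0)
    (hlamGmono : ∀ j, j + 1 ≤ n - 1 → lamG j < lamG (j + 1))
    (hlamGeig : ∀ j, j ≤ n - 1 → ∃ ζ : ℕ → ℝ, IsEigen n π ν (lamG j) ζ)
    (hlamGall : ∀ (μ : ℝ) (ζ : ℕ → ℝ), IsEigen n π ν μ ζ → ∃ j ≤ n - 1, μ = lamG j)
    -- the family `λ ↦ ξ_λ`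
    (ξ : ℝ → ℕ → ℝ) (hξ : ∀ lam : ℝ, XiRec n π ν lam (ξ lam)) :
    ∀ i, 1 ≤ i → i ≤ n - 1 → ∃ ε : ℝ, 0 < ε ∧
      ∀ lam0 : ℝ, lamG i - ε < lam0 → lam0 < lamG i + ε → 0 < lam0 →
        ∀ seq : ℕ → ℝ, seq 0 = lam0 →
          (∀ ℓ, seq (ℓ + 1) =
            EForm n ν (ξ (seq ℓ)) (ξ (seq ℓ)) / varPi n π (ξ (seq ℓ))) →
          ((∀ ℓ, 1 ≤ ℓ → seq (ℓ + 1) ≤ seq ℓ) ∨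
           (∀ ℓ, 1 ≤ ℓ → seq ℓ ≤ seq (ℓ + 1))) ∧
          Filter.Tendsto seq Filter.atTop (nhds (lamG i)) := by
  intro i hi1 hin
  have hmono : StrictMonoOn lamG (Set.Iic (n - 1)) :=
    strictMonoOn_of_lt_add_one Set.ordConnected_Iic fun j _ _ hj => hlamGmono j hj
  have hrange : ∀ j ∈ Finset.range n, j ≤ n - 1 := fun j hj =>
    Nat.le_sub_one_of_lt (Finset.mem_range.1 hj)
  obtain ⟨ζ, hζ⟩ := exists_isEigenbasis (by lia) hlamG0 (hmono.injOn.mono hrange) fun j hj =>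
    hlamGeig j (hrange j hj)
  have hi : i ∈ (Finset.range n).erase 0 := by
    rw [Finset.mem_erase, Finset.mem_range]; lia
  obtain ⟨ε, hε, hiter⟩ := eventually_nhds_iff_ball.1 <|
    hζ.eventually_iterate_rayleigh hlamG0 hπ hπ1 hν hν0 hνn hξ hi fun _ => rfl
  refine ⟨ε, hε, fun lam0 hlo hhi _ seq hseq0 hseq => ?_⟩
  obtain ⟨hmon, hlim⟩ := hiter lam0 (by rw [Real.ball_eq_Ioo]; exact ⟨hlo, hhi⟩)
  obtain rfl : seq = fun l => (fun y => EForm n ν (ξ y) (ξ y) / varPi n π (ξ y))^[l] lam0 := by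
    funext l
    induction l with
    | zero => exact hseq0
    | succ l ih => rw [hseq, ih, Function.iterate_succ_apply']
  exact ⟨hmon.imp (fun h l hl => h hl (hl.trans l.le_succ) l.le_succ)
    (fun h l hl => h hl (hl.trans l.le_succ) l.le_succ), hlim⟩
end
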